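/- arXiv:2110.15050 — 3 statements merged into one kernel-verified Lean document; each statement's English description precedes it below -/
import Mathlib

section
/- Let 1/2 < p < 1 and let r_{n,k} be the root-cluster weights for random binary search trees, i.e. random increasing d-ary trees with d=2 (φ(0)=1, φ(1)=2, φ(2)=2, φ(δ)=0 for δ>2). Then for every integer k ≥ 1, the normalized k-th moment of the root-cluster size satisfies lim_{n→∞} m_k(n)/n^{k(2p-1)} = k!·p^{2(k-1)}/((2p-1)^{2k-1}·Γ(k(2p-1)+1)). -/
open Finset Filter Asymptotics

/-- The root-cluster weight recursion. -/
noncomputable def clusterRec (p : ℝ) (φ : ℕ → ℝ) (r : ℕ → ℕ → ℝ) (b : ℕ → ℝ) : Prop :=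
  (∀ m, b m = ∑ k ∈ Finset.Icc 1 m, r m k) ∧
  ∀ n k : ℕ, 1 ≤ n → 1 ≤ k →
    r n k =
      ∑ δ ∈ Finset.range n, ∑ s ∈ (Finset.range (δ + 1)).attach,
        (δ.choose s.1 : ℝ) * (φ δ / (δ.factorial : ℝ)) *
          ∑ f ∈ (Finset.Nat.antidiagonalTuple δ (n - 1)).filter (fun f => ∀ i, 1 ≤ f i),
            (((n - 1).factorial : ℝ) / ∏ i, ((f i).factorial : ℝ)) *
              ∑ g ∈ (Finset.Nat.antidiagonalTuple s.1 (k - 1)).filter (fun g => ∀ i, 1 ≤ g i),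
                p ^ s.1 * (1 - p) ^ (δ - s.1) *
                  (∏ i : Fin s.1,
                    r (f (Fin.castLE (Nat.lt_succ_iff.mp (Finset.mem_range.mp s.2)) i)) (g i)) *
                  ∏ j ∈ Finset.univ.filter (fun j : Fin δ => s.1 ≤ (j : ℕ)), b (f j)

/-- Partial Bell polynomials. -/
noncomputable def bellPartial (k j : ℕ) (x : ℕ → ℝ) : ℝ :=
  ∑ m ∈ (Fintype.piFinset (fun _ : Fin (k - j + 1) => Finset.range (k + 1))).filter
      (fun m : Fin (k - j + 1) → ℕ => (∑ i : Fin (k - j + 1), ((i : ℕ) + 1) * m i) = k ∧ (∑ i, m i) = j),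
    (k.factorial : ℝ) *
      ∏ i : Fin (k - j + 1), x ((i : ℕ) + 1) ^ m i /
        (((m i).factorial : ℝ) * (((i : ℕ) + 1).factorial : ℝ) ^ m i)


noncomputable def hh (β : ℝ) (n : ℕ) : ℝ := ∏ j ∈ Finset.range n, (β + j) / (j + 1)

lemma hh_zero (β : ℝ) : hh β 0 = 1 := by simp [hh]
lemma hh_succ (β : ℝ) (n : ℕ) : ((n:ℝ)+1) * hh β (n+1) = (β + n) * hh β n := by
  have : (n:ℝ)+1 ≠ 0 := by positivity
  simp only [hh, Finset.prod_range_succ]; field_simp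
lemma hh_pos {β : ℝ} (h : 0 < β) (n : ℕ) : 0 < hh β n := by
  apply Finset.prod_pos; intros; positivity
lemma hh_one (n : ℕ) : hh 1 n = 1 := by
  apply Finset.prod_eq_one; intro i _; rw [add_comm]; apply div_self; positivity

lemma hh_conv (β γ : ℝ) (n : ℕ) :
    ∑ x ∈ antidiagonal n, hh β x.1 * hh γ x.2 = hh (β+γ) n := by
  induction n with
  | zero => simp [hh_zero]
  | succ n ih =>
    have h0 : (n:ℝ)+1 ≠ 0 := by positivity
    apply mul_left_cancel₀ h0
    rw [hh_succ, ← ih, Finset.mul_sum, Finset.mul_sum]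
    have e1 : ∑ x ∈ antidiagonal (n+1), ((n:ℝ)+1) * (hh β x.1 * hh γ x.2)
       = ∑ x ∈ antidiagonal (n+1), ((x.1:ℝ) * hh β x.1 * hh γ x.2)
        + ∑ x ∈ antidiagonal (n+1), (hh β x.1 * ((x.2:ℝ) * hh γ x.2)) := by
      rw [← Finset.sum_add_distrib]
      apply Finset.sum_congr rfl
      intro x hx
      have : (x.1:ℝ) + x.2 = n + 1 := by exact_mod_cast (mem_antidiagonal.mp hx)
      rw [← this]; ring
    rw [e1, Finset.Nat.sum_antidiagonal_succ, Finset.Nat.sum_antidiagonal_succ']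
    simp only [Nat.cast_zero, zero_mul, mul_zero, zero_add, Nat.cast_add, Nat.cast_one, hh_succ]
    rw [← Finset.sum_add_distrib]
    apply Finset.sum_congr rfl
    intro x hx
    have : (x.1:ℝ) + x.2 = n := by exact_mod_cast (mem_antidiagonal.mp hx)
    rw [← this]; ring

lemma hh_sum (β : ℝ) (n : ℕ) : ∑ i ∈ range (n+1), hh β i = hh (β+1) n := by
  rw [← hh_conv, Finset.Nat.sum_antidiagonal_eq_sum_range_succ_mk]
  simp [hh_one]

lemma hh_up (β : ℝ) (n : ℕ) : β * hh (β+1) n = (β + n) * hh β n := by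
  induction n with
  | zero => simp [hh_zero]
  | succ n ih =>
    have h0 : (n:ℝ)+1 ≠ 0 := by positivity
    apply mul_left_cancel₀ h0
    have h1 := hh_succ β n
    have h2 := hh_succ (β+1) n
    push_cast
    linear_combination β * h2 + (β+1+n) * ih - (β+1+n)*h1

lemma hh_asymp {β : ℝ} (h : 0 < β) :
    Tendsto (fun n : ℕ => hh β n / (n:ℝ) ^ (β - 1)) atTop (nhds (1 / Real.Gamma β)) := by
  have h1 := Real.GammaSeq_tendsto_Gamma β
  have h2 := h1.inv₀ (Real.Gamma_pos_of_pos h).ne'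
  have h3 : Tendsto (fun n : ℕ => ((n:ℝ) / (β + n))) atTop (nhds 1) := by
    have := tendsto_natCast_div_add_atTop β
    simpa [add_comm] using this
  have h4 := h2.mul h3
  rw [one_div]
  rw [mul_one] at h4
  apply h4.congr'
  filter_upwards [eventually_gt_atTop 0] with n hn
  have hn' : (0:ℝ) < n := by exact_mod_cast hn
  have e : hh β n * n.factorial = ∏ j ∈ range n, (β + j) := by
    rw [hh, Finset.prod_div_distrib]
    have : ∏ j ∈ range n, ((j:ℝ)+1) = n.factorial := by
      rw [← Finset.prod_range_add_one_eq_factorial]; push_cast; rfl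
    rw [this]; field_simp
  rw [Real.GammaSeq, Finset.prod_range_succ, ← e, Real.rpow_sub hn', Real.rpow_one]
  have : (n:ℝ)^β ≠ 0 := (Real.rpow_pos_of_pos hn' _).ne'
  have : (n.factorial:ℝ) ≠ 0 := by positivity
  have : β + n ≠ 0 := by positivity
  field_simp

lemma hh_ratio {β γ : ℝ} (h : 0 < β) (hg : β < γ) :
    Tendsto (fun n : ℕ => hh β n / hh γ n) atTop (nhds 0) := by
  have hγ : 0 < γ := h.trans hg
  have h1 := (hh_asymp h).div (hh_asymp hγ) (by have := Real.Gamma_pos_of_pos hγ; positivity)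
  have h2 : Tendsto (fun n : ℕ => (n:ℝ) ^ (-(γ - β))) atTop (nhds 0) :=
    (tendsto_rpow_neg_atTop (by linarith)).comp tendsto_natCast_atTop_atTop
  have h3 := h1.mul h2
  rw [mul_zero] at h3
  apply h3.congr'
  filter_upwards [eventually_gt_atTop 0] with n hn
  have hn' : (0:ℝ) < n := by exact_mod_cast hn
  have e : (n:ℝ)^(β-1) = (n:ℝ)^(γ-1) * (n:ℝ) ^ (-(γ - β)) := by
    rw [← Real.rpow_add hn']; congr 1; ring
  have : (n:ℝ)^(γ-1) ≠ 0 := (Real.rpow_pos_of_pos hn' _).ne'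
  have : (n:ℝ)^(-(γ-β)) ≠ 0 := (Real.rpow_pos_of_pos hn' _).ne'
  have := (hh_pos hγ n).ne'
  simp only [Pi.div_apply]
  rw [e]; field_simp

def Asy (β : ℝ) (x : ℕ → ℝ) (A : ℝ) : Prop := Tendsto (fun n => x n / hh β n) atTop (nhds A)

lemma Asy.add {β A B : ℝ} {x y : ℕ → ℝ} (h1 : Asy β x A) (h2 : Asy β y B) :
    Asy β (fun n => x n + y n) (A + B) := by
  have := Tendsto.add h1 h2
  simpa only [Asy, add_div] using this

lemma Asy.const_mul {β A : ℝ} {x : ℕ → ℝ} (c : ℝ) (h1 : Asy β x A) :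
    Asy β (fun n => c * x n) (c * A) := by
  have := Tendsto.const_mul c h1
  simpa only [Asy, mul_div_assoc] using this

lemma Asy.hself {β : ℝ} (h : 0 < β) : Asy β (hh β) 1 := by
  have : (fun n => hh β n / hh β n) = fun _ => 1 := by
    ext n; exact div_self (hh_pos h n).ne'
  rw [Asy, this]; exact tendsto_const_nhds

lemma Asy.sum {ι : Type*} {β : ℝ} (s : Finset ι) (x : ι → ℕ → ℝ) (A : ι → ℝ)
    (h : ∀ i ∈ s, Asy β (x i) (A i)) : Asy β (fun n => ∑ i ∈ s, x i n) (∑ i ∈ s, A i) := by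
  have := tendsto_finsetSum s h
  simpa only [Asy, Finset.sum_div] using this

lemma Asy.lift {β γ A : ℝ} {x : ℕ → ℝ} (hb : 0 < β) (hg : β < γ) (h : Asy β x A) : Asy γ x 0 := by
  have := Tendsto.mul h (hh_ratio hb hg)
  rw [mul_zero] at this
  apply this.congr
  intro n
  have := (hh_pos hb n).ne'
  field_simp

lemma Asy.sub_self {β A : ℝ} {x : ℕ → ℝ} (hb : 0 < β) (h : Asy β x A) :
    Asy β (fun n => x n - A * hh β n) 0 := by
  have := h.add ((Asy.hself hb).const_mul (-A))
  convert this using 1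
  · ext n; ring
  · ring

lemma Asy.bound {β A : ℝ} {x : ℕ → ℝ} (hb : 0 < β) (h : Asy β x A) :
    ∃ K, 0 ≤ K ∧ ∀ n, |x n| ≤ K * hh β n := by
  obtain ⟨K, hK⟩ := (Metric.isBounded_range_of_tendsto _ h).exists_norm_le
  refine ⟨K, (norm_nonneg _).trans (hK _ ⟨0, rfl⟩), fun n => ?_⟩
  have := hK _ ⟨n, rfl⟩
  rw [Real.norm_eq_abs, abs_div, abs_of_pos (hh_pos hb n), div_le_iff₀ (hh_pos hb n)] at this
  exact this

lemma Asy.dom {β γ : ℝ} {x : ℕ → ℝ} (hb : 0 < β) (hg : 0 < γ) (h : Asy β x 0) (ε : ℝ) (he : 0 < ε) :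
    ∃ C, 0 ≤ C ∧ ∀ n, |x n| ≤ ε * hh β n + C * hh γ n := by
  obtain ⟨N, hN⟩ := (Metric.tendsto_atTop.mp h) ε he
  refine ⟨∑ i ∈ range N, |x i| / hh γ i,
    Finset.sum_nonneg fun i _ => div_nonneg (abs_nonneg _) (hh_pos hg i).le, fun n => ?_⟩
  have hp := hh_pos hb n
  have hp' := hh_pos hg n
  by_cases hn : N ≤ n
  · have := hN n hn
    rw [Real.dist_eq, sub_zero, abs_div, abs_of_pos hp, div_lt_iff₀ hp] at this
    have : 0 ≤ (∑ i ∈ range N, |x i| / hh γ i) * hh γ n :=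
      mul_nonneg (Finset.sum_nonneg fun i _ => div_nonneg (abs_nonneg _) (hh_pos hg i).le) hp'.le
    linarith
  · have h1 := Finset.single_le_sum (f := fun i => |x i| / hh γ i) (s := range N)
      (fun i _ => div_nonneg (abs_nonneg _) (hh_pos hg i).le) (mem_range.mpr (not_le.mp hn))
    rw [div_le_iff₀ hp'] at h1
    have : 0 ≤ ε * hh β n := by positivity
    linarith

lemma Asy.of_dom {β γ : ℝ} {x : ℕ → ℝ} (hg : 0 < γ) (hb : γ < β)
    (h : ∀ ε > 0, ∃ C, ∀ n, |x n| ≤ ε * hh β n + C * hh γ n) : Asy β x 0 := by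
  rw [Asy, Metric.tendsto_atTop]
  intro ε he
  obtain ⟨C, hC⟩ := h (ε/2) (by positivity)
  have h1 := (hh_ratio hg hb).const_mul C
  rw [mul_zero] at h1
  obtain ⟨N, hN⟩ := (Metric.tendsto_atTop.mp h1) (ε/2) (by positivity)
  refine ⟨N, fun n hn => ?_⟩
  have h2 := hN n hn
  rw [Real.dist_eq, sub_zero] at h2 ⊢
  have hp := hh_pos (hg.trans hb) n
  have h3 := (le_abs_self _).trans_lt h2
  rw [mul_div, div_lt_iff₀ hp] at h3
  rw [abs_div, abs_of_pos hp, div_lt_iff₀ hp]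
  have := hC n
  linarith

noncomputable def conv (x y : ℕ → ℝ) (n : ℕ) : ℝ := ∑ i ∈ antidiagonal n, x i.1 * y i.2

lemma conv_comm (x y : ℕ → ℝ) (n : ℕ) : conv x y n = conv y x n := by
  unfold conv
  rw [← Finset.Nat.sum_antidiagonal_swap]
  simp [mul_comm]

lemma conv_null {β γ K : ℝ} {x y : ℕ → ℝ} (hb : 0 < β) (hg : 0 < γ) (hx : Asy β x 0)
    (hK : 0 ≤ K) (hy : ∀ n, |y n| ≤ K * hh γ n) : Asy (β + γ) (conv x y) 0 := by
  apply Asy.of_dom (γ := β/2 + γ) (by positivity) (by linarith)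
  intro ε he
  obtain ⟨C, hC0, hC⟩ := hx.dom hb (half_pos hb) (ε / (K+1)) (by positivity)
  refine ⟨C * K, fun n => ?_⟩
  rw [← hh_conv, ← hh_conv, Finset.mul_sum, Finset.mul_sum, ← Finset.sum_add_distrib]
  refine (Finset.abs_sum_le_sum_abs _ _).trans (Finset.sum_le_sum fun i _ => ?_)
  rw [abs_mul]
  have h1 := hh_pos hb i.1
  have h2 := hh_pos hg i.2
  have h3 := hh_pos (half_pos hb) i.1
  calc |x i.1| * |y i.2| ≤ (ε / (K+1) * hh β i.1 + C * hh (β/2) i.1) * (K * hh γ i.2) := by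
        apply mul_le_mul (hC _) (hy _) (abs_nonneg _); positivity
    _ = ε * (K / (K+1)) * (hh β i.1 * hh γ i.2) + C * K * (hh (β/2) i.1 * hh γ i.2) := by ring
    _ ≤ _ := by
      gcongr
      have : K / (K+1) ≤ 1 := by rw [div_le_one (by positivity)]; linarith
      nlinarith

lemma Asy.conv {β γ A B : ℝ} {x y : ℕ → ℝ} (hb : 0 < β) (hg : 0 < γ) (hx : Asy β x A)
    (hy : Asy γ y B) : Asy (β + γ) (conv x y) (A * B) := by
  obtain ⟨K, hK, hK'⟩ := hy.bound hg
  have h1 := conv_null hb hg (hx.sub_self hb) hK hK'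
  have h2 := (conv_null hg hb (hy.sub_self hg) zero_le_one
    (fun n => by rw [one_mul, abs_of_pos (hh_pos hb n)])).const_mul A
  rw [add_comm γ β] at h2
  have h3 := (h1.add h2).add ((Asy.hself (add_pos hb hg)).const_mul (A * B))
  convert h3 using 1
  · ext n
    rw [conv_comm _ (hh β)]
    unfold _root_.conv
    rw [← hh_conv, Finset.mul_sum, Finset.mul_sum, ← Finset.sum_add_distrib, ← Finset.sum_add_distrib]
    apply Finset.sum_congr rfl; intros; ring
  · ring

def Sol (c : ℝ) (a g : ℕ → ℝ) : Prop :=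
  a 0 = 0 ∧ ∀ n : ℕ, ((n:ℝ)+1) * a (n+1) = c * ∑ i ∈ range (n+1), a i + g n

noncomputable def ss (c γ : ℝ) (n : ℕ) : ℝ := (hh γ n - hh c n) / (γ - c)

lemma sol_ss {c γ : ℝ} (h : γ ≠ c) : Sol c (ss c γ) (hh (γ+1)) := by
  refine ⟨by simp [ss, hh_zero], fun n => ?_⟩
  have : γ - c ≠ 0 := sub_ne_zero.mpr h
  simp only [ss]
  rw [← Finset.sum_div, Finset.sum_sub_distrib, hh_sum, hh_sum]
  field_simp
  have h1 := hh_succ γ n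
  have h2 := hh_succ c n
  have h3 := hh_up γ n
  have h4 := hh_up c n
  linear_combination h1 - h2 - h3 + h4

lemma Sol.comb {c : ℝ} {a g a' g' : ℕ → ℝ} (h : Sol c a g) (h' : Sol c a' g') (s t : ℝ) :
    Sol c (fun n => s * a n + t * a' n) (fun n => s * g n + t * g' n) := by
  refine ⟨by simp [h.1, h'.1], fun n => ?_⟩
  have h1 := h.2 n
  have h2 := h'.2 n
  rw [Finset.sum_add_distrib, ← Finset.mul_sum, ← Finset.mul_sum]
  linear_combination s * h1 + t * h2

lemma Sol.le {c : ℝ} (hc : 0 ≤ c) {a g a' g' : ℕ → ℝ} (h : Sol c a g) (h' : Sol c a' g')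
    (hg : ∀ n, |g n| ≤ g' n) (n : ℕ) : |a n| ≤ a' n := by
  induction n using Nat.strong_induction_on with
  | _ n ih =>
    cases n with
    | zero => simp [h.1, h'.1]
    | succ n =>
      have h0 : (0:ℝ) < (n:ℝ)+1 := by positivity
      have h1 := h.2 n
      have h2 := h'.2 n
      apply le_of_mul_le_mul_left _ h0
      rw [h2, ← abs_of_pos h0, ← abs_mul, h1]
      refine (abs_add_le _ _).trans (add_le_add ?_ (hg n))
      rw [abs_mul, abs_of_nonneg hc]
      gcongr
      refine (Finset.abs_sum_le_sum_abs _ _).trans (Finset.sum_le_sum fun i hi => ?_)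
      exact ih i (mem_range.mp hi)

lemma Sol.asy {c γ G : ℝ} (hc : 0 < c) (hγ : c < γ) {a g : ℕ → ℝ} (h : Sol c a g)
    (hg : Asy (γ+1) g G) : Asy γ a (G / (γ - c)) := by
  have hγ0 : 0 < γ := hc.trans hγ
  have hgc : 0 < γ - c := by linarith
  have hS := h.comb (sol_ss hγ.ne') 1 (-G)
  have hg' := hg.sub_self (by positivity)
  have key : Asy γ (fun n => 1 * a n + -G * ss c γ n) 0 := by
    apply Asy.of_dom (γ := (c+γ)/2) (by positivity) (by linarith)
    intro ε he
    obtain ⟨C, hC0, hC⟩ := hg'.dom (γ := (c+γ)/2 + 1) (by positivity) (by positivity)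
      (ε * (γ - c)) (by positivity)
    have hS' := (sol_ss hγ.ne').comb (sol_ss (c := c) (γ := (c+γ)/2) (by linarith)) (ε * (γ - c)) C
    refine ⟨C / ((c+γ)/2 - c), fun n => ?_⟩
    have := hS.le hc.le hS' (fun n => by
      have := hC n
      convert this using 2; ring) n
    refine this.trans ?_
    have hx := hh_pos hc n
    have e2 : 0 < (c+γ)/2 - c := by linarith
    simp only [ss]
    have i1 : ε * (γ - c) * ((hh γ n - hh c n)/(γ - c)) ≤ ε * hh γ n := by
      rw [mul_assoc, mul_div_cancel₀ _ hgc.ne']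
      nlinarith
    have i2 : C * ((hh ((c+γ)/2) n - hh c n)/((c+γ)/2 - c)) ≤ C / ((c+γ)/2 - c) * hh ((c+γ)/2) n := by
      rw [mul_div_assoc', div_mul_eq_mul_div]
      gcongr
      linarith
    linarith
  have hs : Asy γ (ss c γ) (1 / (γ - c)) := by
    have h1 := ((Asy.hself hγ0).add (((Asy.hself hc).lift hc hγ).const_mul (-1))).const_mul (1/(γ-c))
    convert h1 using 1
    · ext n; simp only [ss]; ring
    · ring
  have := key.add (hs.const_mul G)
  convert this using 1
  · ext n; ring
  · ring

noncomputable def UU (p : ℝ) : ℕ → Polynomial ℝ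
  | 0 => 1
  | n+1 => Polynomial.C (1/((n:ℝ)+1)) * (Polynomial.X * ∑ i : Fin (n+1),
      (Polynomial.C p * UU p i + Polynomial.C (1-p)) * (Polynomial.C p * UU p (n - i) + Polynomial.C (1-p)))
termination_by n => n
decreasing_by all_goals omega

noncomputable def VV (p : ℝ) (n : ℕ) : Polynomial ℝ := Polynomial.C p * UU p n + Polynomial.C (1-p)

lemma UU_zero (p : ℝ) : UU p 0 = 1 := by rw [UU]
lemma UU_succ (p : ℝ) (n : ℕ) : UU p (n+1) = Polynomial.C (1/((n:ℝ)+1)) *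
    (Polynomial.X * ∑ x ∈ antidiagonal n, VV p x.1 * VV p x.2) := by
  rw [UU, Finset.Nat.sum_antidiagonal_eq_sum_range_succ_mk, Finset.sum_range]
  rfl

lemma UU_eval (p : ℝ) (n : ℕ) : (UU p n).eval 1 = 1 := by
  induction n using Nat.strong_induction_on with
  | _ n ih =>
    cases n with
    | zero => simp [UU_zero]
    | succ n =>
      rw [UU_succ]
      have : ∀ x ∈ antidiagonal n, (VV p x.1 * VV p x.2).eval 1 = 1 := by
        intro x hx
        have := mem_antidiagonal.mp hx
        simp [VV, ih x.1 (by omega), ih x.2 (by omega)]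
      rw [Polynomial.eval_mul, Polynomial.eval_mul, Polynomial.eval_finsetSum, Finset.sum_congr rfl this]
      simp
      field_simp

lemma UU_deg (p : ℝ) (n : ℕ) : (UU p n).natDegree ≤ n := by
  induction n using Nat.strong_induction_on with
  | _ n ih =>
    cases n with
    | zero => simp [UU_zero]
    | succ n =>
      have hV : ∀ m < n + 1, (VV p m).natDegree ≤ m := by
        intro m hm
        refine (Polynomial.natDegree_add_C).trans_le ?_
        exact (Polynomial.natDegree_C_mul_le _ _).trans (ih m hm)
      rw [UU_succ]
      refine (Polynomial.natDegree_C_mul_le _ _).trans ?_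
      refine Polynomial.natDegree_mul_le.trans ?_
      have : (∑ x ∈ antidiagonal n, VV p x.1 * VV p x.2).natDegree ≤ n := by
        apply Polynomial.natDegree_sum_le_of_forall_le
        intro x hx
        have := mem_antidiagonal.mp hx
        refine Polynomial.natDegree_mul_le.trans ?_
        have := hV x.1 (by omega)
        have := hV x.2 (by omega)
        omega
      have := Polynomial.natDegree_X_le (R := ℝ)
      omega

lemma UU_coeff_zero (p : ℝ) (n : ℕ) : (UU p (n+1)).coeff 0 = 0 := by
  rw [UU_succ]; simp

lemma UU_coeff_succ (p : ℝ) (n k : ℕ) : (UU p (n+1)).coeff (k+1) =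
    1/((n:ℝ)+1) * ∑ x ∈ antidiagonal n, (VV p x.1 * VV p x.2).coeff k := by
  rw [UU_succ, Polynomial.coeff_C_mul, Polynomial.coeff_X_mul, Polynomial.finsetSum_coeff]

/-- sums of coefficients weighted -/
lemma UU_sum (p : ℝ) (n : ℕ) (f : ℕ → ℝ) : 
    ∑ k ∈ Icc 1 (n+1), f k * (UU p (n+1)).coeff k = ∑ k ∈ range (n+2), f k * (UU p (n+1)).coeff k := by
  rw [Finset.range_eq_Ico, ← Finset.add_sum_Ioo_eq_sum_Ico (by omega)]
  rw [UU_coeff_zero, mul_zero, zero_add]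
  apply Finset.sum_congr _ (fun _ _ => rfl)
  ext; simp; omega

lemma sum_tuple_two {M : Type*} [AddCommMonoid M] (n : ℕ) (F : (Fin 2 → ℕ) → M) :
    ∑ f ∈ (Finset.Nat.antidiagonalTuple 2 n).filter (fun f => ∀ i, 1 ≤ f i), F f
     = ∑ x ∈ antidiagonal n, if 1 ≤ x.1 ∧ 1 ≤ x.2 then F ![x.1, x.2] else 0 := by
  rw [Finset.Nat.antidiagonalTuple_two, Finset.sum_filter, Finset.sum_map]
  simp [Fin.forall_fin_two]

lemma sum_tuple_one {M : Type*} [AddCommMonoid M] (n : ℕ) (F : (Fin 1 → ℕ) → M) :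
    ∑ f ∈ (Finset.Nat.antidiagonalTuple 1 n).filter (fun f => ∀ i, 1 ≤ f i), F f
     = if 1 ≤ n then F ![n] else 0 := by
  rw [Finset.Nat.antidiagonalTuple_one, Finset.sum_filter]
  simp

lemma sum_tuple_zero {M : Type*} [AddCommMonoid M] (n : ℕ) (F : (Fin 0 → ℕ) → M) :
    ∑ f ∈ (Finset.Nat.antidiagonalTuple 0 n).filter (fun f => ∀ i, 1 ≤ f i), F f
     = if n = 0 then F ![] else 0 := by
  cases n <;> simp

noncomputable def Term (p : ℝ) (r : ℕ → ℕ → ℝ) (b : ℕ → ℝ) (n k δ s : ℕ) (hs : s ≤ δ) (φ : ℝ) : ℝ :=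
  (δ.choose s : ℝ) * (φ / (δ.factorial : ℝ)) *
          ∑ f ∈ (Finset.Nat.antidiagonalTuple δ n).filter (fun f => ∀ i, 1 ≤ f i),
            ((n.factorial : ℝ) / ∏ i, ((f i).factorial : ℝ)) *
              ∑ g ∈ (Finset.Nat.antidiagonalTuple s k).filter (fun g => ∀ i, 1 ≤ g i),
                p ^ s * (1 - p) ^ (δ - s) *
                  (∏ i : Fin s, r (f (Fin.castLE hs i)) (g i)) *
                  ∏ j ∈ Finset.univ.filter (fun j : Fin δ => s ≤ (j : ℕ)), b (f j)

lemma rec_clean {p : ℝ} {r : ℕ → ℕ → ℝ} {b : ℕ → ℝ} (hrec : clusterRec p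
      (fun δ => if δ ≤ 2 then ((Nat.factorial 2 : ℝ) / ((2 - δ).factorial : ℝ)) else 0) r b)
    (n k : ℕ) : r (n+1) (k+1) = (if n = 0 ∧ k = 0 then 1 else 0) +
      (if 1 ≤ n then 2 * ((1-p) * (if k = 0 then b n else 0) + p * (if 1 ≤ k then r n k else 0)) else 0)
      + ∑ x ∈ antidiagonal n, if 1 ≤ x.1 ∧ 1 ≤ x.2 then
        (n.factorial : ℝ) / (x.1.factorial * x.2.factorial) * 
          ((1-p)^2 * (if k = 0 then b x.1 * b x.2 else 0) 
           + 2 * p * (1-p) * (if 1 ≤ k then r x.1 k * b x.2 else 0)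
           + p^2 * ∑ y ∈ antidiagonal k, if 1 ≤ y.1 ∧ 1 ≤ y.2 then r x.1 y.1 * r x.2 y.2 else 0) else 0 := by
  rw [hrec.2 (n+1) (k+1) (by omega) (by omega)]
  have attach : ∀ (δ : ℕ) (F : {x // x ∈ range (δ+1)} → ℝ),
    ∑ s ∈ (range (δ+1)).attach, F s = ∑ s : Fin (δ+1), F ⟨s, mem_range.mpr s.2⟩ := by
    intro δ F
    refine Finset.sum_bij' (fun s _ => (⟨s.1, mem_range.mp s.2⟩ : Fin (δ+1)))
      (fun s _ => ⟨s.1, mem_range.mpr s.2⟩) ?_ ?_ ?_ ?_ ?_ <;> simp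
  simp only [attach, Nat.add_sub_cancel]
  set T : ℕ → ℝ := fun δ => _ with hT
  change ∑ δ ∈ range (n+1), T δ = _
  have hT3 : ∀ δ, 3 ≤ δ → T δ = 0 := by
    intro δ hδ
    simp [hT, show ¬ δ ≤ 2 by omega]
  have h0 : T 0 = if n = 0 ∧ k = 0 then 1 else 0 := by
    have e : T 0 = Term p r b n k 0 0 le_rfl (if 0 ≤ 2 then ((Nat.factorial 2 : ℝ) / ((2 - 0).factorial : ℝ)) else 0) :=
      Fin.sum_univ_one _
    rw [e, Term]
    simp only [sum_tuple_zero]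
    rcases n with _ | n <;> rcases k with _ | k <;> simp
  have h1 : T 1 = if 1 ≤ n then 2 * ((1-p) * (if k = 0 then b n else 0) + p * (if 1 ≤ k then r n k else 0)) else 0 := by
    have e : T 1 = Term p r b n k 1 0 (by norm_num) (if 1 ≤ 2 then ((Nat.factorial 2 : ℝ) / ((2 - 1).factorial : ℝ)) else 0) +
       Term p r b n k 1 1 (by norm_num) (if 1 ≤ 2 then ((Nat.factorial 2 : ℝ) / ((2 - 1).factorial : ℝ)) else 0) :=
      Fin.sum_univ_two _
    rw [e, Term, Term]
    have f10 : (Finset.univ.filter (fun j : Fin 1 => 0 ≤ (j : ℕ))) = {0} := by decide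
    have f11 : (Finset.univ.filter (fun j : Fin 1 => 1 ≤ (j : ℕ))) = ∅ := by decide
    simp only [sum_tuple_zero, sum_tuple_one, f10, f11]
    have hf : (n.factorial : ℝ) ≠ 0 := by positivity
    rcases n with _ | n
    · simp
    · rcases k with _ | k <;> simp [hf]
  have h2 : T 2 = ∑ x ∈ antidiagonal n, if 1 ≤ x.1 ∧ 1 ≤ x.2 then
        (n.factorial : ℝ) / (x.1.factorial * x.2.factorial) * 
          ((1-p)^2 * (if k = 0 then b x.1 * b x.2 else 0) 
           + 2 * p * (1-p) * (if 1 ≤ k then r x.1 k * b x.2 else 0)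
           + p^2 * ∑ y ∈ antidiagonal k, if 1 ≤ y.1 ∧ 1 ≤ y.2 then r x.1 y.1 * r x.2 y.2 else 0) else 0 := by
    have e : T 2 = Term p r b n k 2 0 (by norm_num) (if 2 ≤ 2 then ((Nat.factorial 2 : ℝ) / ((2 - 2).factorial : ℝ)) else 0) +
       Term p r b n k 2 1 (by norm_num) (if 2 ≤ 2 then ((Nat.factorial 2 : ℝ) / ((2 - 2).factorial : ℝ)) else 0) +
       Term p r b n k 2 2 le_rfl (if 2 ≤ 2 then ((Nat.factorial 2 : ℝ) / ((2 - 2).factorial : ℝ)) else 0) :=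
      Fin.sum_univ_three _
    rw [e, Term, Term, Term]
    have f20 : (Finset.univ.filter (fun j : Fin 2 => 0 ≤ (j : ℕ))) = {0, 1} := by decide
    have f21 : (Finset.univ.filter (fun j : Fin 2 => 1 ≤ (j : ℕ))) = {1} := by decide
    have f22 : (Finset.univ.filter (fun j : Fin 2 => 2 ≤ (j : ℕ))) = ∅ := by decide
    have c2 : ∀ i : Fin 2, Fin.castLE (le_refl 2) i = i := fun i => rfl
    have c21 : ∀ i : Fin 1, Fin.castLE (by norm_num : 1 ≤ 2) i = 0 := by decide
    simp only [sum_tuple_zero, sum_tuple_one, sum_tuple_two, f20, f21, f22, c2, c21]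
    rw [Finset.mul_sum, Finset.mul_sum, Finset.mul_sum, ← Finset.sum_add_distrib, ← Finset.sum_add_distrib]
    apply Finset.sum_congr rfl
    intro x hx
    by_cases hx1 : 1 ≤ x.1 ∧ 1 ≤ x.2
    · simp only [if_pos hx1]
      have hs : ∀ c : ℝ, ∑ y ∈ antidiagonal k, (if 1 ≤ y.1 ∧ 1 ≤ y.2 then c * (r x.1 y.1 * r x.2 y.2) else 0)
          = c * ∑ y ∈ antidiagonal k, (if 1 ≤ y.1 ∧ 1 ≤ y.2 then (r x.1 y.1 * r x.2 y.2) else 0) := by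
        intro c
        rw [Finset.mul_sum]
        apply Finset.sum_congr rfl
        intro y _
        split_ifs <;> simp
      rcases k with _ | k
      · simp [Fin.prod_univ_two]
      · simp [Fin.prod_univ_two, mul_assoc, hs]; ring
    · simp only [if_neg hx1]; simp
  have hall : ∑ δ ∈ range (n+1), T δ = ∑ δ ∈ range 3, T δ := by
    by_cases hn : 2 ≤ n
    · symm
      apply Finset.sum_subset
      · intro x; simp; omega
      · intro x _ hx
        exact hT3 x (by simpa using hx)
    · apply Finset.sum_subset
      · intro x; simp; omega
      · intro x hx1 hx2
        simp only [mem_range] at hx1 hx2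
        have : n = 0 ∨ n = 1 := by omega
        rcases this with rfl | rfl
        · have : x = 1 ∨ x = 2 := by omega
          rcases this with rfl | rfl
          · rw [h1]; simp
          · rw [h2]; simp
        · have : x = 2 := by omega
          subst this
          rw [h2]
          simp [Finset.Nat.antidiagonal_succ]
  rw [hall, Finset.sum_range_succ, Finset.sum_range_succ, Finset.sum_range_one, h0, h1, h2]

lemma VV_zero (p : ℝ) : VV p 0 = 1 := by
  rw [VV, UU_zero, mul_one, ← Polynomial.C_add]; simp

lemma sum_adss (n : ℕ) (F : ℕ × ℕ → ℝ) : ∑ x ∈ antidiagonal (n+2), F x =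
    F (0, n+2) + F (n+2, 0) + ∑ x ∈ antidiagonal n, F (x.1+1, x.2+1) := by
  rw [Finset.Nat.sum_antidiagonal_succ, Finset.Nat.sum_antidiagonal_succ']; simp; ring

lemma antidiag_split (n : ℕ) (F : ℕ × ℕ → ℝ) : ∑ x ∈ antidiagonal n, F x =
    (if n = 0 then F (0,0) else 0) + (if 1 ≤ n then F (0,n) + F (n,0) else 0) +
    ∑ x ∈ antidiagonal n, if 1 ≤ x.1 ∧ 1 ≤ x.2 then F x else 0 := by
  rcases n with _ | _ | n
  · simp
  · simp [Finset.Nat.antidiagonal_succ]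
  · rw [sum_adss, sum_adss]
    simp [add_comm, add_left_comm]

lemma UU_mul_coeff (p : ℝ) (i j k : ℕ) (hi : 1 ≤ i) (hj : 1 ≤ j) :
    (UU p i * UU p j).coeff k = ∑ y ∈ antidiagonal k,
      if 1 ≤ y.1 ∧ 1 ≤ y.2 then (UU p i).coeff y.1 * (UU p j).coeff y.2 else 0 := by
  obtain ⟨i, rfl⟩ : ∃ m, i = m + 1 := ⟨i - 1, by omega⟩
  obtain ⟨j, rfl⟩ : ∃ m, j = m + 1 := ⟨j - 1, by omega⟩
  rw [Polynomial.coeff_mul]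
  apply Finset.sum_congr rfl
  rintro ⟨a, c⟩ _
  rcases a with _ | a <;> rcases c with _ | c <;> simp [UU_coeff_zero]

lemma b_eq {p : ℝ} {r : ℕ → ℕ → ℝ} {b : ℕ → ℝ} (hb : ∀ m, b m = ∑ k ∈ Finset.Icc 1 m, r m k)
    (m : ℕ) (h : ∀ k, 1 ≤ k → r (m+1) k = ((m+1).factorial : ℝ) * (UU p (m+1)).coeff k) :
    b (m+1) = (m+1).factorial := by
  rw [hb]
  have e : ∑ k ∈ Icc 1 (m+1), r (m+1) k = ∑ k ∈ Icc 1 (m+1), ((m+1).factorial : ℝ) * (UU p (m+1)).coeff k :=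
    Finset.sum_congr rfl fun k hk => h k (mem_Icc.mp hk).1
  rw [e, UU_sum p m (fun _ => ((m+1).factorial : ℝ)), ← Finset.mul_sum]
  have := UU_eval p (m+1)
  rw [Polynomial.eval_eq_sum_range' (n := m+2) (by have := UU_deg p (m+1); omega)] at this
  simp only [one_pow, mul_one] at this
  rw [this, mul_one]

lemma r_eq {p : ℝ} {r : ℕ → ℕ → ℝ} {b : ℕ → ℝ} (hrec : clusterRec p
      (fun δ => if δ ≤ 2 then ((Nat.factorial 2 : ℝ) / ((2 - δ).factorial : ℝ)) else 0) r b)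
    (n : ℕ) : ∀ k, 1 ≤ k → r (n+1) k = ((n+1).factorial : ℝ) * (UU p (n+1)).coeff k := by
  induction n using Nat.strong_induction_on with
  | _ n ih =>
    intro k hk
    obtain ⟨k, rfl⟩ : ∃ m, k = m + 1 := ⟨k - 1, by omega⟩
    have hr : ∀ m, 1 ≤ m → m ≤ n → ∀ k, 1 ≤ k → r m k = (m.factorial : ℝ) * (UU p m).coeff k := by
      intro m hm hmn
      obtain ⟨m, rfl⟩ : ∃ l, m = l + 1 := ⟨m - 1, by omega⟩
      exact ih m (by omega)
    have hb : ∀ m, 1 ≤ m → m ≤ n → b m = m.factorial := by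
      intro m hm hmn
      obtain ⟨m, rfl⟩ : ∃ l, m = l + 1 := ⟨m - 1, by omega⟩
      exact b_eq hrec.1 m (ih m (by omega))
    have hc0 : ∀ m, 1 ≤ m → (UU p m).coeff 0 = 0 := by
      intro m hm
      obtain ⟨m, rfl⟩ : ∃ l, m = l + 1 := ⟨m - 1, by omega⟩
      exact UU_coeff_zero p m
    rw [rec_clean hrec, UU_coeff_succ, antidiag_split n (fun x => (VV p x.1 * VV p x.2).coeff k)]
    have hn1 : ((n:ℝ)+1) ≠ 0 := by positivity
    rw [← mul_assoc, Nat.factorial_succ, Nat.cast_mul, Nat.cast_add, Nat.cast_one,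
      show ((n:ℝ)+1) * n.factorial * (1/((n:ℝ)+1)) = n.factorial by field_simp]
    rw [mul_add (n.factorial : ℝ), mul_add (n.factorial : ℝ)]
    have hVc : ∀ m, (VV p m).coeff k = p * (UU p m).coeff k + if k = 0 then (1-p) else 0 := by
      intro m; rw [VV, Polynomial.coeff_add, Polynomial.coeff_C_mul, Polynomial.coeff_C]
    refine congrArg₂ (fun a b : ℝ => a + b) ?_ ?_
    · refine congrArg₂ (fun a b : ℝ => a + b) ?_ ?_
      · by_cases hn : n = 0
        · subst hn
          by_cases hk : k = 0 <;> simp [VV_zero, Polynomial.coeff_one, hk]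
        · simp [hn]
      · by_cases hn : 1 ≤ n
        · simp only [if_pos hn, VV_zero, one_mul, mul_one, hVc]
          rcases k with _ | k
          · simp [hb n hn le_rfl, hc0 n hn]; ring
          · simp [hr n hn le_rfl]; ring
        · simp [hn]
    · have hswap : ∑ x ∈ antidiagonal n, (if 1 ≤ x.1 ∧ 1 ≤ x.2 then (UU p x.1).coeff k else 0)
          = ∑ x ∈ antidiagonal n, (if 1 ≤ x.1 ∧ 1 ≤ x.2 then (UU p x.2).coeff k else 0) := by
        rw [← Finset.Nat.sum_antidiagonal_swap]
        simp [and_comm]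
      have key : ∑ x ∈ antidiagonal n, (if 1 ≤ x.1 ∧ 1 ≤ x.2 then (VV p x.1 * VV p x.2).coeff k else 0)
        = ∑ x ∈ antidiagonal n, (if 1 ≤ x.1 ∧ 1 ≤ x.2 then ((1-p)^2 * (if k = 0 then 1 else 0)
          + 2 * p * (1-p) * (UU p x.1).coeff k + p^2 * (UU p x.1 * UU p x.2).coeff k) else 0) := by
        have : ∑ x ∈ antidiagonal n, (if 1 ≤ x.1 ∧ 1 ≤ x.2 then (VV p x.1 * VV p x.2).coeff k else 0)
          = ∑ x ∈ antidiagonal n, (if 1 ≤ x.1 ∧ 1 ≤ x.2 then ((1-p)^2 * (if k = 0 then 1 else 0)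
          + 2 * p * (1-p) * (UU p x.1).coeff k + p^2 * (UU p x.1 * UU p x.2).coeff k) else 0)
          + p * (1-p) * (∑ x ∈ antidiagonal n, (if 1 ≤ x.1 ∧ 1 ≤ x.2 then (UU p x.2).coeff k else 0)
           - ∑ x ∈ antidiagonal n, (if 1 ≤ x.1 ∧ 1 ≤ x.2 then (UU p x.1).coeff k else 0)) := by
          rw [← Finset.sum_sub_distrib, Finset.mul_sum, ← Finset.sum_add_distrib]
          apply Finset.sum_congr rfl
          intro x _
          split_ifs with h1 h2
          · have : VV p x.1 * VV p x.2 = Polynomial.C (p^2) * (UU p x.1 * UU p x.2) +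
              Polynomial.C (p * (1-p)) * UU p x.1 + Polynomial.C (p * (1-p)) * UU p x.2
              + Polynomial.C ((1-p)^2) := by
              simp only [VV, Polynomial.C_mul, Polynomial.C_pow]; ring
            rw [this]
            simp only [Polynomial.coeff_add, Polynomial.coeff_C_mul, Polynomial.coeff_C, h2, if_true]
            ring
          · have : VV p x.1 * VV p x.2 = Polynomial.C (p^2) * (UU p x.1 * UU p x.2) +
              Polynomial.C (p * (1-p)) * UU p x.1 + Polynomial.C (p * (1-p)) * UU p x.2
              + Polynomial.C ((1-p)^2) := by
              simp only [VV, Polynomial.C_mul, Polynomial.C_pow]; ring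
            rw [this]
            simp only [Polynomial.coeff_add, Polynomial.coeff_C_mul, Polynomial.coeff_C, h2, if_false]
            ring
          · simp
        rw [this, hswap]; ring
      rw [key, Finset.mul_sum]
      apply Finset.sum_congr rfl
      intro x hx
      have hxn := mem_antidiagonal.mp hx
      by_cases h1 : 1 ≤ x.1 ∧ 1 ≤ x.2
      · simp only [if_pos h1]
        have hy : ∑ y ∈ antidiagonal k, (if 1 ≤ y.1 ∧ 1 ≤ y.2 then r x.1 y.1 * r x.2 y.2 else 0)
            = (x.1.factorial * x.2.factorial : ℝ) * (UU p x.1 * UU p x.2).coeff k := by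
          rw [UU_mul_coeff _ _ _ _ h1.1 h1.2, Finset.mul_sum]
          apply Finset.sum_congr rfl
          intro y _
          split_ifs with h2
          · rw [hr x.1 h1.1 (by omega) _ h2.1, hr x.2 h1.2 (by omega) _ h2.2]; ring
          · simp
        rw [hy, hb x.1 h1.1 (by omega), hb x.2 h1.2 (by omega)]
        have f1 : (x.1.factorial : ℝ) ≠ 0 := by positivity
        have f2 : (x.2.factorial : ℝ) ≠ 0 := by positivity
        rcases k with _ | k
        · simp [hc0 x.1 h1.1]; field_simp
        · simp [hr x.1 h1.1 (by omega)]; field_simp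
      · simp [if_neg h1]

noncomputable def EE (p : ℝ) (n : ℕ) : PowerSeries ℝ := Polynomial.aeval (PowerSeries.exp ℝ) (UU p n)
noncomputable def WW (p : ℝ) (n : ℕ) : PowerSeries ℝ := Polynomial.aeval (PowerSeries.exp ℝ) (VV p n)
noncomputable def AA (p : ℝ) (k n : ℕ) : ℝ := PowerSeries.coeff k (EE p n)
noncomputable def GG (p : ℝ) (k n : ℕ) : ℝ := PowerSeries.coeff k (WW p n)

lemma AA_moment (p : ℝ) (k n : ℕ) :
    ∑ j ∈ Icc 1 (n+1), (j:ℝ)^k * (UU p (n+1)).coeff j = (k.factorial : ℝ) * AA p k (n+1) := by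
  rw [UU_sum p n (fun j => (j:ℝ)^k), AA, EE, 
    Polynomial.aeval_eq_sum_range' (n := n+2) (by have := UU_deg p (n+1); omega), map_sum, Finset.mul_sum]
  apply Finset.sum_congr rfl
  intro j _
  have : (k.factorial : ℝ) ≠ 0 := by positivity
  rw [PowerSeries.coeff_smul, PowerSeries.exp_pow_eq_rescale_exp, PowerSeries.coeff_rescale, PowerSeries.coeff_exp]
  simp
  field_simp

lemma AA_rec (p : ℝ) (k n : ℕ) : ((n:ℝ)+1) * AA p k (n+1) =
    ∑ l ∈ antidiagonal k, 1 / (l.1.factorial : ℝ) * 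
      ∑ a ∈ antidiagonal l.2, conv (GG p a.1) (GG p a.2) n := by
  have e : EE p (n+1) = PowerSeries.C (1/((n:ℝ)+1)) * (PowerSeries.exp ℝ * ∑ x ∈ antidiagonal n, WW p x.1 * WW p x.2) := by
    simp only [EE, UU_succ, map_mul, map_sum, WW, Polynomial.aeval_X, Polynomial.aeval_C]
    rfl
  rw [AA, e, PowerSeries.coeff_C_mul, PowerSeries.coeff_mul]
  have hn1 : ((n:ℝ)+1) ≠ 0 := by positivity
  rw [← mul_assoc, mul_one_div_cancel hn1, one_mul]
  apply Finset.sum_congr rfl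
  intro l _
  rw [PowerSeries.coeff_exp, map_sum]
  congr 1
  · simp
  · simp only [PowerSeries.coeff_mul, conv, GG]
    rw [Finset.sum_comm]

lemma GG_eq (p : ℝ) (k n : ℕ) : GG p (k+1) n = p * AA p (k+1) n := by
  have : WW p n = PowerSeries.C p * EE p n + PowerSeries.C (1-p) := by
    simp only [WW, VV, map_mul, map_add, EE, Polynomial.aeval_C]; rfl
  rw [GG, this, map_add, PowerSeries.coeff_C_mul, PowerSeries.coeff_C]
  simp [AA]

lemma AA_zero (p : ℝ) (k : ℕ) : AA p (k+1) 0 = 0 := by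
  simp [AA, EE, UU_zero, PowerSeries.coeff_one]

lemma EE_zero (p : ℝ) (n : ℕ) : AA p 0 n = 1 := by
  rcases n with _ | n
  · simp [AA, EE, UU_zero]
  · have := AA_moment p 0 n
    have h2 := UU_sum p n (fun _ => 1)
    have h3 := UU_eval p (n+1)
    rw [Polynomial.eval_eq_sum_range' (n := n+2) (by have := UU_deg p (n+1); omega)] at h3
    simp only [one_pow, mul_one, one_mul, pow_zero, Nat.factorial_zero, Nat.cast_one] at *
    linarith

lemma GG_zero (p : ℝ) (n : ℕ) : GG p 0 n = 1 := by
  have : WW p n = PowerSeries.C p * EE p n + PowerSeries.C (1-p) := by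
    simp only [WW, VV, map_mul, map_add, EE, Polynomial.aeval_C]; rfl
  rw [GG, this, map_add, PowerSeries.coeff_C_mul, PowerSeries.coeff_C]
  have := EE_zero p n
  rw [AA] at this
  rw [this]; simp

lemma conv_one (x y : ℕ → ℝ) (hx : ∀ n, x n = 1) (n : ℕ) : conv x y n = ∑ i ∈ range (n+1), y i := by
  rw [conv_comm, conv, Finset.Nat.sum_antidiagonal_eq_sum_range_succ_mk]
  simp [hx]

lemma sol_one (p : ℝ) : Sol (2*p) (AA p 1) (hh 2) := by
  refine ⟨AA_zero p 0, fun n => ?_⟩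
  have h2 : hh 2 n = n + 1 := by
    have := hh_sum 1 n
    norm_num [hh_one] at this
    exact this.symm
  rw [AA_rec, h2]
  have a1 : antidiagonal 1 = {((0:ℕ),(1:ℕ)), (1,0)} := rfl
  have a0 : antidiagonal 0 = {((0:ℕ),(0:ℕ))} := rfl
  rw [a1, Finset.sum_pair (by decide)]
  simp only [a1, a0, Finset.sum_singleton]
  rw [Finset.sum_pair (by decide)]
  simp
  rw [conv_comm (GG p 1) (GG p 0), conv_one _ _ (GG_zero p), conv_one _ _ (GG_zero p)]
  simp only [GG_eq p 0, ← Finset.mul_sum, GG_zero]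
  simp
  ring

lemma AA_one {p : ℝ} (hp0 : 1 / 2 < p) : Asy (2*p) (AA p 1) (1/(2*p-1)) := by
  have hs := sol_ss (c := 2*p) (γ := 1) (by linarith)
  norm_num at hs
  have hd := (sol_one p).comb hs 1 (-1)
  have hz : Sol (2*p) (fun _ => 0) (fun _ => 0) := ⟨rfl, fun n => by simp⟩
  have e : ∀ n, AA p 1 n = ss (2*p) 1 n := by
    intro n
    have := hd.le (by linarith) hz (fun n => by simp) n
    have := abs_nonpos_iff.mp this
    linarith
  have hp : 0 < 2 * p := by linarith
  have h1 := ((Asy.hself hp).add (((Asy.hself one_pos).lift one_pos (show 1 < 2*p by linarith)).const_mul (-1))).const_mul (1/(2*p-1))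
  convert h1 using 1
  · ext n
    have : 2 * p - 1 ≠ 0 := by linarith
    have : 1 - 2 * p ≠ 0 := by linarith
    rw [e, ss]; field_simp; ring
  · ring

noncomputable def dd (p : ℝ) (k : ℕ) : ℝ := p^(2*k) / (2*p-1)^(2*k+1)

noncomputable def DD (p : ℝ) : ℕ → ℝ
  | 0 => 1
  | k+1 => p * dd p k

lemma AA_asy {p : ℝ} (hp0 : 1 / 2 < p) (k : ℕ) :
    Asy (((k:ℝ)+1) * (2*p-1) + 1) (AA p (k+1)) (dd p k) := by
  induction k using Nat.strong_induction_on with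
  | _ k ih =>
    have hα : 0 < 2 * p - 1 := by linarith
    have hpos : ∀ m : ℕ, 0 < (m:ℝ) * (2*p-1) + 1 := fun m => by positivity
    have hG : ∀ m, m ≤ k → Asy ((m:ℝ) * (2*p-1) + 1) (GG p m) (DD p m) := by
      intro m hm
      rcases m with _ | m
      · have := Asy.hself one_pos
        convert this using 1
        · simp
        · ext n; rw [GG_zero, hh_one]
        · rfl
      · have := (ih m (by omega)).const_mul p
        convert this using 1
        · push_cast; rfl
        · ext n; rw [GG_eq]
        · rfl
    rcases k with _ | k
    · have := AA_one hp0
      convert this using 1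
      · push_cast; ring
      · simp [dd]
    · set γ : ℝ := ((k:ℝ)+2) * (2*p-1) + 1 with hγ
      have hcv : ∀ a b : ℕ, a ≤ k+1 → b ≤ k+1 → Asy (((a+b:ℕ):ℝ) * (2*p-1) + 2) (conv (GG p a) (GG p b)) (DD p a * DD p b) := by
        intro a b ha hb
        have := (hG a ha).conv (hpos a) (hpos b) (hG b hb)
        convert this using 1
        push_cast; ring
      set g1 : ℕ → ℝ := fun n => ∑ a ∈ antidiagonal k, conv (GG p (a.1+1)) (GG p (a.2+1)) n with hg1
      set g2 : ℕ → ℝ := fun n => ∑ l ∈ antidiagonal (k+1), 1 / ((l.1+1).factorial : ℝ) * 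
        ∑ a ∈ antidiagonal l.2, conv (GG p a.1) (GG p a.2) n with hg2
      have hsol : Sol (2*p) (AA p (k+2)) (fun n => g1 n + g2 n) := by
        refine ⟨AA_zero p (k+1), fun n => ?_⟩
        rw [AA_rec, Finset.Nat.sum_antidiagonal_succ]
        simp only [sum_adss]
        rw [conv_comm (GG p (k+2)) (GG p 0), conv_one _ _ (GG_zero p)]
        simp only [GG_eq p (k+1), ← Finset.mul_sum, hg1, hg2]
        simp
        ring
      have h1 : Asy (γ+1) g1 (((k:ℝ)+1) * (p^2 * p^(2*k) / (2*p-1)^(2*k+2))) := by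
        have : ∑ a ∈ antidiagonal k, (p^2 * p^(2*k) / (2*p-1)^(2*k+2)) = ((k:ℝ)+1) * (p^2 * p^(2*k) / (2*p-1)^(2*k+2)) := by
          simp
        rw [← this]
        apply Asy.sum
        intro a ha
        have hak := mem_antidiagonal.mp ha
        have := hcv (a.1+1) (a.2+1) (by omega) (by omega)
        convert this using 1
        · rw [hγ, show a.1 + 1 + (a.2+1) = k + 2 by omega]; push_cast; ring
        · simp only [DD, dd, ← hak]
          field_simp
          ring
      have h2 : Asy (γ+1) g2 0 := by
        have : ∑ l ∈ antidiagonal (k+1), (1 / ((l.1+1).factorial : ℝ)) * ∑ a ∈ antidiagonal l.2, (0:ℝ) = 0 := by simp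
        rw [← this]
        apply Asy.sum
        intro l hl
        have hlk := mem_antidiagonal.mp hl
        apply Asy.const_mul
        apply Asy.sum
        intro a ha
        have hal := mem_antidiagonal.mp ha
        have := hcv a.1 a.2 (by omega) (by omega)
        refine this.lift (by positivity) ?_
        have h3 : ((a.1+a.2:ℕ):ℝ) ≤ (k:ℝ)+1 := by
          have : a.1 + a.2 ≤ k+1 := by omega
          exact_mod_cast this
        rw [hγ]
        nlinarith
      have := hsol.asy (γ := γ) (by linarith) (by rw [hγ]; have : (0:ℝ) ≤ k := by positivity
                                                  nlinarith) (h1.add h2)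
      convert this using 1
      · rw [hγ]; push_cast; ring
      · have hk : (k:ℝ)+1 ≠ 0 := by positivity
        rw [hγ, show ((k:ℝ)+2)*(2*p-1)+1 - 2*p = (k+1)*(2*p-1) by ring, dd, add_zero]
        field_simp
        ring

/-- for random binary search trees (`d = 2`) with `1/2 < p < 1`, the `k`-th
moment of the root-cluster size, normalized by `n^{k(2p-1)}`, converges to
`k! p^{2(k-1)} / ((2p-1)^{2k-1} Γ(k(2p-1)+1))`. -/
theorem stmt15 (p : ℝ) (hp0 : 1 / 2 < p) (hp1 : p < 1)
    (r : ℕ → ℕ → ℝ) (b : ℕ → ℝ)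
    (hrec : clusterRec p
      (fun δ => if δ ≤ 2 then ((Nat.factorial 2 : ℝ) / ((2 - δ).factorial : ℝ)) else 0) r b)
    (k : ℕ) (hk : 1 ≤ k) :
    Tendsto (fun n : ℕ =>
        ((∑ j ∈ Finset.Icc 1 n, (j : ℝ) ^ k * r n j) / b n)
          / (n : ℝ) ^ ((k : ℝ) * (2 * p - 1)))
      atTop
      (nhds ((k.factorial : ℝ) * p ^ (2 * (k - 1))
        / ((2 * p - 1) ^ (2 * k - 1) * Real.Gamma ((k : ℝ) * (2 * p - 1) + 1)))) := by
  obtain ⟨k, rfl⟩ : ∃ m, k = m + 1 := ⟨k - 1, by omega⟩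
  have hα : 0 < 2 * p - 1 := by linarith
  have hβ : 0 < ((k:ℝ)+1) * (2*p-1) + 1 := by positivity
  have h1 := (Tendsto.mul (AA_asy hp0 k) (hh_asymp hβ)).const_mul ((k+1).factorial : ℝ)
  have e : ((k+1).factorial : ℝ) * p ^ (2 * (k + 1 - 1))
        / ((2 * p - 1) ^ (2 * (k+1) - 1) * Real.Gamma (((k+1:ℕ) : ℝ) * (2 * p - 1) + 1))
      = ((k+1).factorial : ℝ) * (dd p k * (1 / Real.Gamma (((k:ℝ)+1) * (2*p-1) + 1))) := by
    rw [show 2 * (k+1) - 1 = 2*k+1 by omega, Nat.add_sub_cancel, dd]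
    push_cast
    have := (Real.Gamma_pos_of_pos hβ).ne'
    field_simp
  rw [e]
  apply h1.congr'
  filter_upwards [eventually_ge_atTop 1] with n hn
  obtain ⟨n, rfl⟩ : ∃ m, n = m + 1 := ⟨n - 1, by omega⟩
  have hr := r_eq hrec n
  rw [b_eq hrec.1 n hr]
  have hs : ∑ j ∈ Finset.Icc 1 (n+1), (j : ℝ) ^ (k+1) * r (n+1) j
      = ((n+1).factorial : ℝ) * (((k+1).factorial : ℝ) * AA p (k+1) (n+1)) := by
    rw [← AA_moment, Finset.mul_sum]
    apply Finset.sum_congr rfl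
    intro j hj
    rw [hr j (mem_Icc.mp hj).1]; ring
  rw [hs]
  have f1 : ((n+1).factorial : ℝ) ≠ 0 := by positivity
  have f2 := (hh_pos hβ (n+1)).ne'
  rw [add_sub_cancel_right, mul_div_cancel_left₀ _ f1]
  rw [show ((k+1:ℕ):ℝ) = (k:ℝ)+1 by push_cast; rfl]
  field_simp
end

section
/- Let d ≥ 2 be an integer, p = 1/d, and let r_{n,k} be the root-cluster weights for random increasing d-ary trees (φ(δ)=d!/(d-δ)! for 0≤δ≤d, φ(δ)=0 for δ>d). Then for every integer k ≥ 1, the k-th moment of the root-cluster size satisfies m_k(n) ~ E_k·(log n)^{2k-1} as n → ∞ (i.e. lim_{n→∞} m_k(n)/(log n)^{2k-1} = E_k), where E_1 = 1/(d-1) and for k ≥ 2, (2k-1)·E_k = (1/(2d))·Σ_{j=1}^{k-1} C(k,j)·E_j·E_{k-j}. -/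
open Finset Filter Asymptotics

theorem ps_coeff_prod_tuple {S : Type*} [CommSemiring S] (s : ℕ) : ∀ (k : ℕ) (v : Fin s → PowerSeries S),
    PowerSeries.coeff k (∏ i, v i) =
      ∑ g ∈ Finset.Nat.antidiagonalTuple s k, ∏ i, PowerSeries.coeff (g i) (v i) := by
  induction s with
  | zero =>
    intro k v
    cases k with
    | zero => simp
    | succ k => simp [PowerSeries.coeff_one]
  | succ s ih =>
    intro k v
    rw [Fin.prod_univ_succ, PowerSeries.coeff_mul]
    simp_rw [ih, Finset.mul_sum]
    rw [Finset.sum_sigma']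
    refine Finset.sum_bij' (fun x _ => (Fin.cons x.1.1 x.2 : Fin (s+1) → ℕ))
      (fun g _ => ⟨(g 0, ∑ i : Fin s, g i.succ), fun i => g i.succ⟩) ?_ ?_ ?_ ?_ ?_
    · rintro ⟨⟨a, c⟩, g⟩ h
      simp only [mem_sigma, HasAntidiagonal.mem_antidiagonal, Finset.Nat.mem_antidiagonalTuple] at h ⊢
      rw [Fin.sum_univ_succ]
      simp [h.1, h.2]
    · intro g h
      simp only [mem_sigma, HasAntidiagonal.mem_antidiagonal, Finset.Nat.mem_antidiagonalTuple] at h ⊢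
      rw [Fin.sum_univ_succ] at h
      exact ⟨h, trivial⟩
    · rintro ⟨⟨a, c⟩, g⟩ h
      simp only [mem_sigma, HasAntidiagonal.mem_antidiagonal, Finset.Nat.mem_antidiagonalTuple] at h
      obtain ⟨h1, h2⟩ := h
      subst h2
      simp
    · intro g h
      ext i
      refine Fin.cases ?_ (fun i => ?_) i <;> simp
    · rintro ⟨⟨a, c⟩, g⟩ h
      rw [Fin.prod_univ_succ]
      simp

theorem poly_coeff_prod_tuple {S : Type*} [CommSemiring S] (s : ℕ) (k : ℕ) (v : Fin s → Polynomial S) :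
    Polynomial.coeff (∏ i, v i) k =
      ∑ g ∈ Finset.Nat.antidiagonalTuple s k, ∏ i, Polynomial.coeff (v i) (g i) := by
  have h := ps_coeff_prod_tuple s k (fun i => (v i : PowerSeries S))
  simp only [Polynomial.coeff_coe] at h
  rw [← h]
  rw [← Polynomial.coeff_coe]
  congr 1
  exact map_prod (Polynomial.coeToPowerSeries.ringHom (R := S)) v univ

theorem r_vanish {p : ℝ} {φ : ℕ → ℝ} {r : ℕ → ℕ → ℝ} {b : ℕ → ℝ} (h : clusterRec p φ r b) :
    ∀ n k : ℕ, 1 ≤ n → n < k → r n k = 0 := by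
  intro n
  induction n using Nat.strong_induction_on with
  | _ n ih =>
    intro k hn hk
    rw [h.2 n k hn (by omega)]
    refine Finset.sum_eq_zero fun δ hδ => Finset.sum_eq_zero fun s hs => ?_
    refine mul_eq_zero_of_right _ (Finset.sum_eq_zero fun f hf => ?_)
    refine mul_eq_zero_of_right _ (Finset.sum_eq_zero fun g hg => ?_)
    refine mul_eq_zero_of_left (mul_eq_zero_of_right _ ?_) _
    simp only [mem_filter, Finset.Nat.mem_antidiagonalTuple] at hf hg
    have hle : s.1 ≤ δ := Nat.lt_succ_iff.mp (Finset.mem_range.mp s.2)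
    have hsum : ∑ i : Fin s.1, f (Fin.castLE hle i) ≤ n - 1 := by
      rw [← hf.1]
      have := Finset.sum_image (s := (Finset.univ : Finset (Fin s.1))) (g := Fin.castLE hle) (f := f)
        (fun a _ b _ hab => Fin.castLE_injective hle hab)
      rw [← this]
      exact Finset.sum_le_sum_of_subset (Finset.subset_univ _)
    have : ∃ i : Fin s.1, f (Fin.castLE hle i) < g i := by
      by_contra! hcon
      have := Finset.sum_le_sum (s := Finset.univ) (fun i _ => hcon i)
      omega
    obtain ⟨i, hi⟩ := this
    refine Finset.prod_eq_zero (Finset.mem_univ i) (ih _ ?_ _ (hf.2 _) hi)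
    have : f (Fin.castLE hle i) ≤ ∑ i : Fin s.1, f (Fin.castLE hle i) :=
      Finset.single_le_sum (f := fun i => f (Fin.castLE hle i)) (fun _ _ => Nat.zero_le _) (Finset.mem_univ i)
    omega

noncomputable def rh (r : ℕ → ℕ → ℝ) (n : ℕ) : Polynomial ℝ :=
  ∑ k ∈ Finset.Icc 1 n, Polynomial.monomial k (r n k)

theorem rh_coeff {p : ℝ} {φ : ℕ → ℝ} {r : ℕ → ℕ → ℝ} {b : ℕ → ℝ} (h : clusterRec p φ r b)
    (n k : ℕ) (hn : 1 ≤ n) : (rh r n).coeff k = if 1 ≤ k then r n k else 0 := by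
  unfold rh
  simp only [Polynomial.finsetSum_coeff, Polynomial.coeff_monomial]
  rw [Finset.sum_ite_eq' (Finset.Icc 1 n) k]
  by_cases h1 : 1 ≤ k
  · by_cases h2 : k ≤ n
    · simp [h1, h2]
    · simp [h1, h2, r_vanish h n k hn (by omega)]
  · simp [h1]

noncomputable def Rx (r : ℕ → ℕ → ℝ) : PowerSeries (Polynomial ℝ) :=
  PowerSeries.mk fun n => Polynomial.C (1 / (n.factorial : ℝ)) * rh r n

noncomputable def Bx (b : ℕ → ℝ) : PowerSeries ℝ :=
  PowerSeries.mk fun n => b n / (n.factorial : ℝ)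

theorem key_coeff {p : ℝ} {φ : ℕ → ℝ} {r : ℕ → ℕ → ℝ} {b : ℕ → ℝ} (h : clusterRec p φ r b)
    (n k s δ : ℕ) (hs : s ≤ δ) :
    (PowerSeries.coeff n (Rx r ^ s * (PowerSeries.map Polynomial.C (Bx b)) ^ (δ - s))).coeff k
    = ∑ f ∈ (Finset.Nat.antidiagonalTuple δ n).filter (fun f => ∀ i, 1 ≤ f i),
        (1 / ∏ i, ((f i).factorial : ℝ)) *
         ∑ g ∈ (Finset.Nat.antidiagonalTuple s k).filter (fun g => ∀ i, 1 ≤ g i),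
           (∏ i : Fin s, r (f (Fin.castLE hs i)) (g i)) *
              ∏ j ∈ Finset.univ.filter (fun j : Fin δ => s ≤ (j : ℕ)), b (f j) := by
  obtain ⟨t, rfl⟩ := Nat.exists_eq_add_of_le hs
  have hb0 : b 0 = 0 := by rw [h.1]; simp
  have hprod : Rx r ^ s * (PowerSeries.map Polynomial.C (Bx b)) ^ (s + t - s)
      = ∏ i : Fin (s + t), if (i : ℕ) < s then Rx r else PowerSeries.map Polynomial.C (Bx b) := by
    rw [Fin.prod_univ_add]
    simp
  rw [hprod, ps_coeff_prod_tuple, Polynomial.finsetSum_coeff, Finset.sum_filter]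
  refine Finset.sum_congr rfl fun f hf => ?_
  split_ifs with hfi
  · rw [Finset.prod_filter, Fin.prod_univ_add, Fin.prod_univ_add, Fin.prod_univ_add]
    have e1 : ∀ i : Fin s, PowerSeries.coeff (f (Fin.castAdd t i))
        (if ((Fin.castAdd t i : Fin (s+t)) : ℕ) < s then Rx r else PowerSeries.map Polynomial.C (Bx b))
        = Polynomial.C (1 / ((f (Fin.castAdd t i)).factorial : ℝ)) * rh r (f (Fin.castAdd t i)) := by
      intro i; simp [Rx]
    have e2 : ∀ i : Fin t, PowerSeries.coeff (f (Fin.natAdd s i))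
        (if ((Fin.natAdd s i : Fin (s+t)) : ℕ) < s then Rx r else PowerSeries.map Polynomial.C (Bx b))
        = Polynomial.C (b (f (Fin.natAdd s i)) / ((f (Fin.natAdd s i)).factorial : ℝ)) := by
      intro i; simp [Bx]
    simp_rw [e1, e2]
    rw [Finset.prod_mul_distrib, ← map_prod, ← map_prod, Polynomial.coeff_mul_C, Polynomial.coeff_C_mul,
      poly_coeff_prod_tuple, ← Finset.sum_mul, Finset.sum_filter]
    have e3 : ∀ g : Fin s → ℕ, (∏ i, (rh r (f (Fin.castAdd t i))).coeff (g i))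
        = if ∀ i, 1 ≤ g i then ∏ i, r (f (Fin.castAdd t i)) (g i) else 0 := by
      intro g
      simp_rw [fun i => rh_coeff h (f (Fin.castAdd t i)) (g i) (hfi _)]
      split_ifs with hg
      · exact Finset.prod_congr rfl fun i _ => by rw [if_pos (hg i)]
      · push Not at hg
        obtain ⟨i, hi⟩ := hg
        exact Finset.prod_eq_zero (Finset.mem_univ i) (by rw [if_neg (by omega)])
    simp_rw [e3]
    have e4 : (∏ i : Fin s, if s ≤ ((Fin.castAdd t i : Fin (s+t)) : ℕ) then b (f (Fin.castAdd t i)) else 1) = 1 := by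
      refine Finset.prod_eq_one fun i _ => ?_
      rw [if_neg]; simp
    have e5 : (∏ i : Fin t, if s ≤ ((Fin.natAdd s i : Fin (s+t)) : ℕ) then b (f (Fin.natAdd s i)) else 1)
        = ∏ i : Fin t, b (f (Fin.natAdd s i)) := by
      refine Finset.prod_congr rfl fun i _ => ?_
      rw [if_pos]; simp
    rw [e4, e5, Finset.prod_div_distrib, Finset.prod_div_distrib]
    simp only [Finset.prod_const_one]
    have e6 : ∀ i : Fin s, Fin.castLE hs i = Fin.castAdd t i := fun i => rfl
    simp_rw [e6]
    ring
  · push Not at hfi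
    obtain ⟨i, hi⟩ := hfi
    have hi0 : f i = 0 := by omega
    rw [Finset.prod_eq_zero (Finset.mem_univ i), Polynomial.coeff_zero]
    rw [hi0]
    split_ifs
    · simp [Rx, rh]
    · simp [Bx, hb0]

theorem ode_Rx {p : ℝ} {d : ℕ} {r : ℕ → ℕ → ℝ} {b : ℕ → ℝ} (h : clusterRec p
      (fun δ => if δ ≤ d then ((d.factorial : ℝ) / ((d - δ).factorial : ℝ)) else 0) r b) :
    PowerSeries.derivative _ (Rx r) = PowerSeries.C Polynomial.X *
      (PowerSeries.C (Polynomial.C p) * Rx r +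
        PowerSeries.C (Polynomial.C (1 - p)) * PowerSeries.map Polynomial.C (Bx b) + 1) ^ d := by
  have hb0 : b 0 = 0 := by rw [h.1]; simp
  set Bm := PowerSeries.map Polynomial.C (Bx b) with hBm
  have hφ : ∀ δ : ℕ, (if δ ≤ d then ((d.factorial : ℝ) / ((d - δ).factorial : ℝ)) else 0) / (δ.factorial : ℝ)
      = (d.choose δ : ℝ) := by
    intro δ
    split_ifs with hδ
    · rw [Nat.cast_choose ℝ hδ]; field_simp
    · rw [Nat.choose_eq_zero_of_lt (by omega)]; simp
  ext n k
  rw [PowerSeries.coeff_derivative, PowerSeries.coeff_C_mul, add_pow]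
  rcases k with _ | k
  · rw [Polynomial.coeff_X_mul_zero]
    have : (PowerSeries.coeff (n+1) (Rx r) * ((n:Polynomial ℝ) + 1)) = (PowerSeries.coeff (n+1) (Rx r) * Polynomial.C ((n:ℝ) + 1)) := by simp
    rw [this, Polynomial.coeff_mul_C]
    simp [Rx, rh_coeff h (n+1) 0 (by omega)]
  rw [Polynomial.coeff_X_mul]
  have : (PowerSeries.coeff (n+1) (Rx r) * ((n:Polynomial ℝ) + 1)) = (PowerSeries.coeff (n+1) (Rx r) * Polynomial.C ((n:ℝ) + 1)) := by simp
  rw [this, Polynomial.coeff_mul_C]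
  have hl : (PowerSeries.coeff (n+1) (Rx r)).coeff (k+1) * ((n:ℝ) + 1) = r (n+1) (k+1) / (n.factorial : ℝ) := by
    simp only [Rx, PowerSeries.coeff_mk, Polynomial.coeff_C_mul]
    rw [rh_coeff h (n+1) (k+1) (by omega), if_pos (by omega), Nat.factorial_succ]
    push_cast
    have : (n:ℝ) + 1 ≠ 0 := by positivity
    field_simp
  rw [hl, h.2 (n+1) (k+1) (by omega) (by omega)]
  set Z := PowerSeries.C (Polynomial.C p) * Rx r + PowerSeries.C (Polynomial.C (1 - p)) * Bm with hZ
  have hZ0 : PowerSeries.constantCoeff Z = 0 := by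
    rw [hZ, hBm]
    have h1 : PowerSeries.constantCoeff (Rx r) = 0 := by
      rw [← PowerSeries.coeff_zero_eq_constantCoeff_apply]; simp [Rx, rh]
    have h2 : PowerSeries.constantCoeff (PowerSeries.map Polynomial.C (Bx b)) = 0 := by
      rw [← PowerSeries.coeff_zero_eq_constantCoeff_apply, PowerSeries.coeff_map]; simp [Bx, hb0]
    rw [map_add, map_mul, map_mul, h1, h2]; simp
  have hZn : ∀ δ, n < δ → PowerSeries.coeff n (Z ^ δ) = 0 := by
    intro δ hδ
    have : PowerSeries.X ^ δ ∣ Z ^ δ := pow_dvd_pow_of_dvd (PowerSeries.X_dvd_iff.mpr hZ0) δ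
    exact PowerSeries.X_pow_dvd_iff.mp this n hδ
  set c : ℕ → ℝ := fun δ => (PowerSeries.coeff n (Z ^ δ)).coeff k with hc
  have hr : (PowerSeries.coeff n (∑ m ∈ range (d+1), Z ^ m * 1 ^ (d - m) * (d.choose m : PowerSeries (Polynomial ℝ)))).coeff k
      = ∑ δ ∈ range (n+1), (d.choose δ : ℝ) * c δ := by
    rw [map_sum, Polynomial.finsetSum_coeff]
    have h1 : ∀ m, (PowerSeries.coeff n (Z ^ m * 1 ^ (d - m) * (d.choose m : PowerSeries (Polynomial ℝ)))).coeff k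
        = (d.choose m : ℝ) * c m := by
      intro m
      have : (d.choose m : PowerSeries (Polynomial ℝ)) = PowerSeries.C (Polynomial.C (d.choose m : ℝ)) := by simp
      rw [this, one_pow, mul_one, PowerSeries.coeff_mul_C, Polynomial.coeff_mul_C, mul_comm]
    simp_rw [h1]
    have A : ∑ m ∈ range (d+1), (d.choose m : ℝ) * c m = ∑ m ∈ range (d+1+(n+1)), (d.choose m : ℝ) * c m := by
      refine Finset.sum_subset (by intro x; simp; omega) ?_
      intro x _ hx
      rw [Nat.choose_eq_zero_of_lt (by simp at hx; omega)]; simp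
    have B : ∑ m ∈ range (n+1), (d.choose m : ℝ) * c m = ∑ m ∈ range (d+1+(n+1)), (d.choose m : ℝ) * c m := by
      refine Finset.sum_subset (by intro x; simp; omega) ?_
      intro x _ hx
      simp only [hc]
      rw [hZn x (by simp at hx; omega)]; simp
    rw [A, B]
  rw [hr, Finset.sum_div]
  refine Finset.sum_congr rfl fun δ hδ => ?_
  have hcδ : c δ = ∑ s ∈ (range (δ+1)).attach, (δ.choose s.1 : ℝ) * (p ^ s.1 * (1-p)^(δ - s.1)) *
      (PowerSeries.coeff n (Rx r ^ s.1 * Bm ^ (δ - s.1))).coeff k := by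
    rw [Finset.sum_attach (range (δ+1)) (fun s => (δ.choose s : ℝ) * (p ^ s * (1-p)^(δ - s)) *
      (PowerSeries.coeff n (Rx r ^ s * Bm ^ (δ - s))).coeff k)]
    simp only [hc]
    rw [hZ, add_pow, map_sum, Polynomial.finsetSum_coeff]
    refine Finset.sum_congr rfl fun s hs => ?_
    have : (PowerSeries.C (Polynomial.C p) * Rx r) ^ s * (PowerSeries.C (Polynomial.C (1 - p)) * Bm) ^ (δ - s) * (δ.choose s : PowerSeries (Polynomial ℝ))
       = PowerSeries.C (Polynomial.C ((δ.choose s : ℝ) * (p ^ s * (1-p)^(δ - s)))) * (Rx r ^ s * Bm ^ (δ - s)) := by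
      simp only [map_mul, map_pow, map_natCast]
      ring
    rw [this, PowerSeries.coeff_C_mul, Polynomial.coeff_C_mul]
  rw [hcδ, Finset.sum_div, Finset.mul_sum]
  refine Finset.sum_congr rfl fun s hs => ?_
  rw [key_coeff h n k s.1 δ (Nat.lt_succ_iff.mp (Finset.mem_range.mp s.2)), hφ δ]
  simp only [Nat.add_sub_cancel, Finset.mul_sum, Finset.sum_div]
  refine Finset.sum_congr rfl fun f hf => Finset.sum_congr rfl fun g hg => ?_
  have : (n.factorial : ℝ) ≠ 0 := by positivity
  field_simp
noncomputable def swapPS : PowerSeries (PowerSeries ℝ) →+* PowerSeries (PowerSeries ℝ) where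
  toFun F := PowerSeries.mk fun k => PowerSeries.mk fun n => PowerSeries.coeff k (PowerSeries.coeff n F)
  map_one' := by
    ext k n
    simp only [PowerSeries.coeff_mk, PowerSeries.coeff_one]
    split_ifs <;> simp_all
  map_zero' := by ext k n; simp
  map_add' F G := by ext k n; simp
  map_mul' F G := by
    ext k n
    simp only [PowerSeries.coeff_mk, PowerSeries.coeff_mul, map_sum]
    rw [Finset.sum_comm]

theorem coeff_swapPS (F : PowerSeries (PowerSeries ℝ)) (k n : ℕ) :
    PowerSeries.coeff n (PowerSeries.coeff k (swapPS F)) = PowerSeries.coeff k (PowerSeries.coeff n F) := by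
  simp [swapPS]

noncomputable def Psi : PowerSeries (Polynomial ℝ) →+* PowerSeries (PowerSeries ℝ) :=
  swapPS.comp (PowerSeries.map (Polynomial.aeval (PowerSeries.exp ℝ)).toRingHom)

theorem coeff_Psi (F : PowerSeries (Polynomial ℝ)) (k n : ℕ) :
    PowerSeries.coeff n (PowerSeries.coeff k (Psi F)) =
      PowerSeries.coeff k (Polynomial.aeval (PowerSeries.exp ℝ) (PowerSeries.coeff n F)) := by
  simp [Psi, coeff_swapPS]

theorem Psi_deriv (F : PowerSeries (Polynomial ℝ)) (k : ℕ) :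
    PowerSeries.coeff k (Psi (PowerSeries.derivative _ F)) =
      PowerSeries.derivative _ (PowerSeries.coeff k (Psi F)) := by
  ext n
  rw [coeff_Psi, PowerSeries.coeff_derivative, PowerSeries.coeff_derivative, coeff_Psi]
  have : ((n : Polynomial ℝ) + 1) = Polynomial.C ((n:ℝ) + 1) := by simp
  rw [this, map_mul, Polynomial.aeval_C]
  change PowerSeries.coeff k (_ * PowerSeries.C ((n:ℝ)+1)) = _
  rw [PowerSeries.coeff_mul_C]

theorem Psi_mapC (B : PowerSeries ℝ) : Psi (PowerSeries.map Polynomial.C B) = PowerSeries.C B := by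
  ext k n
  rw [coeff_Psi, PowerSeries.coeff_map, Polynomial.aeval_C]
  change PowerSeries.coeff k (PowerSeries.C _) = _
  rw [PowerSeries.coeff_C, PowerSeries.coeff_C]
  split_ifs <;> simp

theorem Psi_CC (p : ℝ) : Psi (PowerSeries.C (Polynomial.C p)) = PowerSeries.C (PowerSeries.C p) := by
  rw [← Psi_mapC, PowerSeries.map_C]

theorem Psi_CX : Psi (PowerSeries.C Polynomial.X) = PowerSeries.map PowerSeries.C (PowerSeries.exp ℝ) := by
  ext k n
  rw [coeff_Psi, PowerSeries.coeff_map, PowerSeries.coeff_C, PowerSeries.coeff_C]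
  split_ifs <;> simp

theorem coeff_Psi_Rx (r : ℕ → ℕ → ℝ) (n k : ℕ) :
    PowerSeries.coeff n (PowerSeries.coeff k (Psi (Rx r))) =
      (∑ j ∈ Finset.Icc 1 n, (j : ℝ) ^ k * r n j) / ((n.factorial : ℝ) * k.factorial) := by
  rw [coeff_Psi]
  simp only [Rx, PowerSeries.coeff_mk, rh, map_mul, map_sum, Polynomial.aeval_C, Polynomial.aeval_monomial]
  change PowerSeries.coeff k (PowerSeries.C _ * ∑ x ∈ Finset.Icc 1 n, PowerSeries.C _ * _) = _
  rw [PowerSeries.coeff_C_mul, map_sum, Finset.mul_sum, Finset.sum_div]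
  refine Finset.sum_congr rfl fun j hj => ?_
  rw [PowerSeries.coeff_C_mul, PowerSeries.exp_pow_eq_rescale_exp, PowerSeries.coeff_rescale, PowerSeries.coeff_exp]
  simp
  field_simp

theorem system {p : ℝ} {d : ℕ} {r : ℕ → ℕ → ℝ} {b : ℕ → ℝ} (h : clusterRec p
      (fun δ => if δ ≤ d then ((d.factorial : ℝ) / ((d - δ).factorial : ℝ)) else 0) r b) (k : ℕ) :
    PowerSeries.derivative _ (PowerSeries.coeff k (Psi (Rx r))) =
      PowerSeries.coeff k (PowerSeries.map PowerSeries.C (PowerSeries.exp ℝ) *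
       (PowerSeries.C (PowerSeries.C p) * Psi (Rx r) + PowerSeries.C (PowerSeries.C (1-p)) * PowerSeries.C (Bx b) + 1) ^ d) := by
  rw [← Psi_deriv, ode_Rx h]
  simp only [map_mul, map_pow, map_add, map_one, Psi_CX, Psi_CC, Psi_mapC]

theorem coeff_zero_Psi_Rx {p : ℝ} {φ : ℕ → ℝ} {r : ℕ → ℕ → ℝ} {b : ℕ → ℝ} (h : clusterRec p φ r b) :
    PowerSeries.coeff 0 (Psi (Rx r)) = Bx b := by
  ext n
  rw [coeff_Psi_Rx]
  simp [Bx, h.1 n]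
def Filt (s : ℕ) (F : PowerSeries (Polynomial ℝ)) : Prop :=
  ∀ j i, 2 * j < i + s → (PowerSeries.coeff j F).coeff i = 0

theorem Filt.add {s : ℕ} {F G : PowerSeries (Polynomial ℝ)} (hF : Filt s F) (hG : Filt s G) : Filt s (F + G) := by
  intro j i h
  simp [hF j i h, hG j i h]

theorem Filt.mono {s s' : ℕ} {F : PowerSeries (Polynomial ℝ)} (hF : Filt s F) (h : s' ≤ s) : Filt s' F :=
  fun j i hh => hF j i (by omega)

theorem Filt.mul {s s' : ℕ} {F G : PowerSeries (Polynomial ℝ)} (hF : Filt s F) (hG : Filt s' G) :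
    Filt (s + s') (F * G) := by
  intro j i h
  rw [PowerSeries.coeff_mul, Polynomial.finsetSum_coeff]
  refine Finset.sum_eq_zero fun x hx => ?_
  rw [Polynomial.coeff_mul]
  refine Finset.sum_eq_zero fun y hy => ?_
  rw [HasAntidiagonal.mem_antidiagonal] at hx hy
  by_cases h1 : 2 * x.1 < y.1 + s
  · rw [hF _ _ h1, zero_mul]
  · rw [hG _ _ (by omega), mul_zero]

theorem Filt.CC (a : ℝ) : Filt 0 (PowerSeries.C (Polynomial.C a)) := by
  intro j i h
  rw [PowerSeries.coeff_C]
  split_ifs with h0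
  · rw [Polynomial.coeff_C, if_neg (by omega)]
  · simp

theorem Filt.one : Filt 0 1 := by
  have := Filt.CC 1
  simpa using this

theorem Filt.nat (a : ℕ) : Filt 0 (a : PowerSeries (Polynomial ℝ)) := by
  have := Filt.CC a
  simpa using this

theorem Filt.X : Filt 2 PowerSeries.X := by
  intro j i h
  rw [PowerSeries.coeff_X]
  split_ifs with h0
  · rw [Polynomial.coeff_one, if_neg (by omega)]
  · simp

theorem Filt.binom {y : PowerSeries (Polynomial ℝ)} (hy : Filt 1 y) (d : ℕ) :
    ∃ F, Filt 3 F ∧ (1 + y) ^ d = 1 + d * y + (d.choose 2 : ℕ) * y ^ 2 + F := by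
  induction d with
  | zero => exact ⟨0, fun j i _ => by simp, by simp⟩
  | succ d ih =>
    obtain ⟨F, hF, h⟩ := ih
    refine ⟨(d.choose 2 : ℕ) * (y * y * y) + F * (1 + y), ?_, ?_⟩
    · exact ((Filt.nat _).mul ((hy.mul hy).mul hy) |>.mono (by omega)).add
        (hF.mul (Filt.one.add (hy.mono (by omega))))
    · rw [pow_succ, h, Nat.choose_succ_succ' d 1]
      push_cast
      rw [Nat.choose_one_right]
      ring

theorem Filt.exp : ∃ F, Filt 3 F ∧
    PowerSeries.map Polynomial.C (PowerSeries.exp ℝ) = 1 + PowerSeries.X + F := by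
  refine ⟨PowerSeries.map Polynomial.C (PowerSeries.exp ℝ) - 1 - PowerSeries.X, ?_, by ring⟩
  intro j i h
  simp only [map_sub, PowerSeries.coeff_map, PowerSeries.coeff_exp, PowerSeries.coeff_one, PowerSeries.coeff_X]
  rcases j with _ | _ | j
  · simp
  · simp
  · simp [Polynomial.coeff_C]
    intro h0; omega

theorem expand {N : PowerSeries (Polynomial ℝ)} (hN : Filt 1 N) (d : ℕ) (hd : 2 ≤ d) :
    ∃ F, Filt 3 F ∧ PowerSeries.map Polynomial.C (PowerSeries.exp ℝ) *
      (1 + PowerSeries.C (Polynomial.C (1 / (d:ℝ))) * N) ^ d - N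
      = 1 + PowerSeries.X + PowerSeries.C (Polynomial.C (((d:ℝ) - 1) / (2 * d))) * (N * N) + F := by
  have hd0 : (d:ℝ) ≠ 0 := by positivity
  obtain ⟨F, hF, hFe⟩ := Filt.exp
  set y := PowerSeries.C (Polynomial.C (1 / (d:ℝ))) * N with hy
  have hy1 : Filt 1 y := (Filt.CC _).mul hN |>.mono (by omega)
  obtain ⟨G, hG, hGe⟩ := Filt.binom hy1 d
  have e1 : (d : PowerSeries (Polynomial ℝ)) * y = N := by
    have : (d : PowerSeries (Polynomial ℝ)) = PowerSeries.C (Polynomial.C (d:ℝ)) := by simp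
    rw [this, hy, ← mul_assoc, ← map_mul, ← map_mul, mul_one_div_cancel hd0]
    simp
  have e2 : ((d.choose 2 : ℕ) : PowerSeries (Polynomial ℝ)) * y ^ 2
      = PowerSeries.C (Polynomial.C (((d:ℝ) - 1) / (2 * d))) * (N * N) := by
    have : ((d.choose 2 : ℕ) : PowerSeries (Polynomial ℝ)) = PowerSeries.C (Polynomial.C ((d.choose 2 : ℕ):ℝ)) := by simp
    rw [this, hy, mul_pow, ← mul_assoc, ← map_pow, ← map_pow, ← map_mul, ← map_mul, pow_two N]
    congr 3
    rw [Nat.cast_choose_two]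
    field_simp
  rw [hGe, hFe, e1, e2]
  set K := PowerSeries.C (Polynomial.C (((d:ℝ) - 1) / (2 * d))) * (N * N) with hK
  have hK2 : Filt 2 K := (Filt.CC _).mul (hN.mul hN) |>.mono (by omega)
  refine ⟨PowerSeries.X * N + PowerSeries.X * K + (1 + PowerSeries.X + F) * G + F * (1 + N + K), ?_, by ring⟩
  refine ((((Filt.X.mul hN).mono (by omega)).add ((Filt.X.mul hK2).mono (by omega))).add ?_).add ?_
  · exact (((Filt.one.add (Filt.X.mono (by omega))).add (hF.mono (by omega))).mul hG).mono (by omega)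
  · exact (hF.mul ((Filt.one.add (hN.mono (by omega))).add (hK2.mono (by omega)))).mono (by omega)
theorem trunc_lemma {S : Type*} [CommRing S] (d : ℕ) (p : S) (hp : p * d = 1) (Ee N N0 : PowerSeries S)
    (hE : PowerSeries.constantCoeff Ee = 1) (hN : PowerSeries.constantCoeff N = 0)
    (hN0 : PowerSeries.constantCoeff N0 = 0) (k : ℕ) (hdvd : PowerSeries.X ^ k ∣ N - N0) :
    PowerSeries.coeff k (Ee * (1 + PowerSeries.C p * N) ^ d - N)
      = PowerSeries.coeff k (Ee * (1 + PowerSeries.C p * N0) ^ d - N0) := by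
  rw [← sub_eq_zero, ← map_sub]
  set u := 1 + PowerSeries.C p * N with hu
  set v := 1 + PowerSeries.C p * N0 with hv
  have hg := (Commute.all u v).mul_geom_sum₂ d
  set G := ∑ i ∈ range d, u ^ i * v ^ (d - 1 - i) with hG
  have huv : u - v = PowerSeries.C p * (N - N0) := by rw [hu, hv]; ring
  have e : (Ee * u ^ d - N) - (Ee * v ^ d - N0) = (N - N0) * (PowerSeries.C p * Ee * G - 1) := by
    have : Ee * u ^ d - Ee * v ^ d = Ee * ((u - v) * G) := by rw [hg]; ring
    rw [huv] at this
    linear_combination this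
  have hu1 : PowerSeries.constantCoeff u = 1 := by simp [hu, hN]
  have hv1 : PowerSeries.constantCoeff v = 1 := by simp [hv, hN0]
  have hc : PowerSeries.X ∣ (PowerSeries.C p * Ee * G - 1) := by
    rw [PowerSeries.X_dvd_iff, hG]
    simp [hE, hu1, hv1, hp]
  have hd2 : PowerSeries.X ^ (k+1) ∣ (Ee * u ^ d - N) - (Ee * v ^ d - N0) := by
    rw [e, pow_succ]
    exact mul_dvd_mul hdvd hc
  exact PowerSeries.X_pow_dvd_iff.mp hd2 k (by omega)

theorem exists_antideriv (Q : Polynomial ℝ) (m : ℕ) (hQ : Q.natDegree ≤ m) :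
    ∃ P : Polynomial ℝ, Polynomial.derivative P = Q ∧ P.natDegree ≤ m + 1 ∧ P.coeff 0 = 0 ∧
      ((m:ℝ) + 1) * P.coeff (m + 1) = Q.coeff m := by
  refine ⟨∑ i ∈ range (m+1), Polynomial.monomial (i+1) (Q.coeff i / ((i:ℝ) + 1)), ?_, ?_, ?_, ?_⟩
  · rw [Polynomial.derivative_sum]
    conv_rhs => rw [Q.as_sum_range' (m+1) (by omega)]
    refine Finset.sum_congr rfl fun i _ => ?_
    rw [Polynomial.derivative_monomial]
    have : (i:ℝ) + 1 ≠ 0 := by positivity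
    push_cast
    rw [div_mul_cancel₀ _ this]
    try simp
  · refine Polynomial.natDegree_sum_le_of_forall_le _ _ fun i hi => ?_
    refine (Polynomial.natDegree_monomial_le _).trans ?_
    simp at hi; omega
  · simp [Polynomial.finsetSum_coeff, Polynomial.coeff_monomial]
  · simp only [Polynomial.finsetSum_coeff, Polynomial.coeff_monomial]
    have : (m:ℝ) + 1 ≠ 0 := by positivity
    simp
    try field_simp

theorem poly_structure (d : ℕ) (hd : 2 ≤ d) (Y T : PowerSeries ℝ)
    (hT : PowerSeries.derivative _ T = Y ^ (d - 1)) (hT0 : PowerSeries.constantCoeff T = 0)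
    (N : PowerSeries (PowerSeries ℝ)) (hN0 : PowerSeries.coeff 0 N = 0)
    (hNc : ∀ k, PowerSeries.constantCoeff (PowerSeries.coeff k N) = 0)
    (hode : ∀ k, 1 ≤ k → PowerSeries.derivative _ (PowerSeries.coeff k N) = Y ^ (d - 1) *
      PowerSeries.coeff k (PowerSeries.map PowerSeries.C (PowerSeries.exp ℝ) *
        (1 + PowerSeries.C (PowerSeries.C (1 / (d:ℝ))) * N) ^ d - N))
    (ε : ℕ → ℝ) (hε1 : ε 1 = 1) (hε : ∀ k : ℕ, 2 ≤ k → (2 * (k:ℝ) - 1) * ε k =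
      ((d:ℝ) - 1) / (2 * d) * ∑ j ∈ Finset.Icc 1 (k-1), ε j * ε (k - j)) :
    ∀ k, 1 ≤ k → ∃ P : Polynomial ℝ, PowerSeries.coeff k N = Polynomial.aeval T P ∧
      P.natDegree ≤ 2 * k - 1 ∧ P.coeff (2 * k - 1) = ε k := by
  have hd0 : (d:ℝ) ≠ 0 := by positivity
  intro k
  induction k using Nat.strong_induction_on with
  | _ k ih =>
  intro hk
  have ih' : ∀ j, ∃ P : Polynomial ℝ, (1 ≤ j → j < k → PowerSeries.coeff j N = Polynomial.aeval T P ∧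
      P.natDegree ≤ 2 * j - 1 ∧ P.coeff (2 * j - 1) = ε j) ∧ (¬ (1 ≤ j ∧ j < k) → P = 0) := by
    intro j
    by_cases h : 1 ≤ j ∧ j < k
    · obtain ⟨P, hP⟩ := ih j h.2 h.1
      exact ⟨P, fun _ _ => hP, fun h' => absurd h h'⟩
    · exact ⟨0, fun h1 h2 => absurd ⟨h1, h2⟩ h, fun _ => rfl⟩
  choose P hP hP0 using ih'
  set M : PowerSeries (Polynomial ℝ) := PowerSeries.mk P with hM
  have hMF : Filt 1 M := by
    intro j i h
    rw [hM, PowerSeries.coeff_mk]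
    by_cases hj : 1 ≤ j ∧ j < k
    · exact Polynomial.coeff_eq_zero_of_natDegree_lt (by have := (hP j hj.1 hj.2).2.1; omega)
    · rw [hP0 j hj]; simp
  obtain ⟨F, hF, hFe⟩ := expand hMF d hd
  set W := PowerSeries.map Polynomial.C (PowerSeries.exp ℝ) *
      (1 + PowerSeries.C (Polynomial.C (1 / (d:ℝ))) * M) ^ d - M with hW
  set φ : Polynomial ℝ →+* PowerSeries ℝ := (Polynomial.aeval T).toRingHom with hφ
  have hφC : ∀ a, φ (Polynomial.C a) = PowerSeries.C a := by
    intro a; rw [hφ]; change Polynomial.aeval T (Polynomial.C a) = _; rw [Polynomial.aeval_C]; rfl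
  have hmapW : PowerSeries.map φ W = PowerSeries.map PowerSeries.C (PowerSeries.exp ℝ) *
        (1 + PowerSeries.C (PowerSeries.C (1 / (d:ℝ))) * PowerSeries.map φ M) ^ d - PowerSeries.map φ M := by
    rw [hW]
    simp only [map_sub, map_mul, map_pow, map_add, map_one, PowerSeries.map_C, hφC]
    congr 2
    ext j : 1
    simp only [PowerSeries.coeff_map, hφC]
  have hMc : PowerSeries.constantCoeff (PowerSeries.map φ M) = 0 := by
    rw [← PowerSeries.coeff_zero_eq_constantCoeff_apply, PowerSeries.coeff_map, hM, PowerSeries.coeff_mk, hP0 0 (by omega), map_zero]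
  have hQ : PowerSeries.coeff k (PowerSeries.map PowerSeries.C (PowerSeries.exp ℝ) *
        (1 + PowerSeries.C (PowerSeries.C (1 / (d:ℝ))) * N) ^ d - N) = φ (PowerSeries.coeff k W) := by
    rw [trunc_lemma d (PowerSeries.C (1 / (d:ℝ))) ?_ _ N (PowerSeries.map φ M) ?_ ?_ hMc k ?_, ← hmapW, PowerSeries.coeff_map]
    · have : (d : PowerSeries ℝ) = PowerSeries.C (d:ℝ) := by simp
      rw [this, ← map_mul, one_div_mul_cancel hd0, map_one]
    · rw [← PowerSeries.coeff_zero_eq_constantCoeff_apply, PowerSeries.coeff_map]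
      simp
    · rw [← PowerSeries.coeff_zero_eq_constantCoeff_apply, hN0]
    · rw [PowerSeries.X_pow_dvd_iff]
      intro j hj
      rw [map_sub, PowerSeries.coeff_map, hM, PowerSeries.coeff_mk]
      rcases Nat.eq_zero_or_pos j with rfl | hj1
      · rw [hN0, hP0 0 (by omega)]; simp
      · rw [(hP j hj1 hj).1]; simp [hφ]
  set Q := PowerSeries.coeff k W with hQdef
  have hQc : ∀ i, 2 * k - 2 ≤ i → Q.coeff i = (if k = 1 ∧ i = 0 then 1 else 0) +
      ((d:ℝ) - 1) / (2 * d) * (PowerSeries.coeff k (M * M)).coeff i := by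
    intro i hi
    rw [hQdef, hFe]
    simp only [map_add, Polynomial.coeff_add, hF k i (by omega), PowerSeries.coeff_C_mul, Polynomial.coeff_C_mul,
      PowerSeries.coeff_one, PowerSeries.coeff_X]
    rw [if_neg (by omega)]
    by_cases h1 : k = 1
    · simp [h1, Polynomial.coeff_one]
    · simp [h1]
  have hMM : (PowerSeries.coeff k (M * M)).coeff (2 * k - 2) = ∑ j ∈ Finset.Icc 1 (k-1), ε j * ε (k - j) := by
    rw [PowerSeries.coeff_mul, Polynomial.finsetSum_coeff,
      Finset.Nat.sum_antidiagonal_eq_sum_range_succ_mk]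
    symm
    have hsub : Finset.Icc 1 (k-1) ⊆ range k.succ := by intro x; simp; omega
    rw [← Finset.sum_subset hsub]
    · refine Finset.sum_congr rfl fun j hj => ?_
      simp only [Finset.mem_Icc] at hj
      simp only [hM, PowerSeries.coeff_mk]
      obtain ⟨-, a1, a2⟩ := hP j (by omega) (by omega)
      obtain ⟨-, b1, b2⟩ := hP (k - j) (by omega) (by omega)
      have : 2 * k - 2 = (2 * j - 1) + (2 * (k - j) - 1) := by omega
      rw [this, Polynomial.coeff_mul_add_eq_of_natDegree_le a1 b1, a2, b2]
    · intro x hx hx'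
      simp only [Finset.mem_Icc, Finset.mem_range] at hx hx'
      simp only [hM, PowerSeries.coeff_mk]
      by_cases hx0 : x = 0
      · rw [hP0 x (by omega)]; simp
      · rw [hP0 (k - x) (by omega)]; simp
  have hQdeg : Q.natDegree ≤ 2 * k - 2 := by
    rw [Polynomial.natDegree_le_iff_coeff_eq_zero]
    intro i hi
    rw [hQc i (by omega), (hMF.mul hMF) k i (by omega), if_neg (by omega)]
    simp
  obtain ⟨A, hA1, hA2, hA3, hA4⟩ := exists_antideriv Q (2 * k - 2) hQdeg
  have hk1 : 2 * k - 2 + 1 = 2 * k - 1 := by omega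
  rw [hk1] at hA2 hA4
  refine ⟨A, ?_, hA2, ?_⟩
  · apply PowerSeries.derivative.ext
    · rw [hode k hk, hQ, Derivation.map_aeval, hA1, hT]
      simp [hφ, mul_comm]
    · rw [hNc k]
      have := Polynomial.hom_eval₂ A (algebraMap ℝ (PowerSeries ℝ)) (PowerSeries.constantCoeff (R := ℝ)) T
      rw [Polynomial.aeval_def, this, hT0, Polynomial.eval₂_at_zero, hA3]
      simp
  · rw [hQc _ le_rfl, hMM] at hA4
    have hkc : ((2 * k - 2 : ℕ) : ℝ) + 1 = 2 * (k:ℝ) - 1 := by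
      rw [Nat.cast_sub (by omega)]; push_cast; ring
    rw [hkc] at hA4
    have hpos : 2 * (k:ℝ) - 1 ≠ 0 := by
      have : (1:ℝ) ≤ k := by exact_mod_cast hk
      linarith
    apply mul_left_cancel₀ hpos
    rw [hA4]
    by_cases h1 : k = 1
    · subst h1; simp [hε1]; norm_num
    · rw [hε k (by omega)]; simp [h1]
theorem stolz_step (D : ℝ) (hD : 0 < D) (m : ℕ) (a a' : ℕ → ℝ)
    (ha : Tendsto (fun n : ℕ => a n / Real.log n ^ m) atTop (nhds (1 / D ^ m)))
    (hrec : ∀ n, a' (n+1) = a' n + (m + 1) * a n / (1 + D * n)) :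
    Tendsto (fun n : ℕ => a' n / Real.log n ^ (m+1)) atTop (nhds (1 / D ^ (m+1))) := by
  set L : ℕ → ℝ := fun n => Real.log n ^ (m+1) with hL
  set g : ℕ → ℝ := fun n => L (n+1) - L n with hg
  set f : ℕ → ℝ := fun n => (m + 1) * a n / (1 + D * n) - 1 / D ^ (m+1) * g n with hf
  have hlogtop : Tendsto (fun n : ℕ => Real.log n) atTop atTop :=
    Real.tendsto_log_atTop.comp tendsto_natCast_atTop_atTop
  have hLtop : Tendsto L atTop atTop := (tendsto_pow_atTop (by omega)).comp hlogtop
  have hgnn : ∀ n, 0 ≤ g n := by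
    intro n
    simp only [hg, hL, sub_nonneg]
    rcases Nat.eq_zero_or_pos n with rfl | hn
    · simp
    · refine pow_le_pow_left₀ (Real.log_natCast_nonneg n) (Real.log_le_log (by exact_mod_cast hn) ?_) _
      push_cast; linarith
  have hgsum : ∀ n, ∑ i ∈ range n, g i = L n := by
    intro n
    rw [Finset.sum_range_sub]; simp [hL]
  have hfsum : ∀ n, ∑ i ∈ range n, f i = a' n - a' 0 - 1 / D ^ (m+1) * L n := by
    intro n
    rw [← hgsum n]
    simp only [hf]
    rw [Finset.sum_sub_distrib, ← Finset.mul_sum]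
    congr 1
    rw [← Finset.sum_range_sub]
    refine Finset.sum_congr rfl fun i _ => ?_
    rw [hrec]; ring
  -- ratio of logs
  have hn1 : Tendsto (fun n : ℕ => (n:ℝ) * (Real.log ((n+1 : ℕ):ℝ) - Real.log n)) atTop (nhds 1) := by
    have h := (Real.tendsto_mul_log_one_add_div_atTop 1).comp tendsto_natCast_atTop_atTop
    refine h.congr' ?_
    filter_upwards [eventually_gt_atTop 0] with n hn
    have : (0:ℝ) < n := by exact_mod_cast hn
    simp only [Function.comp]
    rw [← Real.log_div (by positivity) (by positivity)]
    congr 2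
    push_cast; field_simp
  have hratio : Tendsto (fun n : ℕ => Real.log ((n+1 : ℕ):ℝ) / Real.log n) atTop (nhds 1) := by
    have h0 : Tendsto (fun n : ℕ => 1 + ((n:ℝ) * (Real.log ((n+1 : ℕ):ℝ) - Real.log n)) * (1 / (n:ℝ)) * (Real.log n)⁻¹) atTop (nhds (1 + 1 * 0 * 0)) :=
      ((hn1.mul tendsto_one_div_atTop_nhds_zero_nat).mul hlogtop.inv_tendsto_atTop).const_add 1
    simp only [mul_zero, add_zero] at h0
    refine h0.congr' ?_
    filter_upwards [eventually_gt_atTop 1] with n hn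
    have hl : 0 < Real.log n := Real.log_pos (by exact_mod_cast hn)
    have : (0:ℝ) < n := by exact_mod_cast (by omega : 0 < n)
    field_simp
    ring
  have hgr : Tendsto (fun n : ℕ => (n:ℝ) * g n / Real.log n ^ m) atTop (nhds (m + 1)) := by
    have h0 : Tendsto (fun n : ℕ => ((n:ℝ) * (Real.log ((n+1 : ℕ):ℝ) - Real.log n)) *
        ∑ i ∈ range (m+1), (Real.log ((n+1 : ℕ):ℝ) / Real.log n) ^ i) atTop (nhds (1 * ∑ i ∈ range (m+1), (1:ℝ) ^ i)) :=
      hn1.mul (tendsto_finsetSum _ fun i _ => hratio.pow i)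
    simp only [one_pow, Finset.sum_const, card_range, nsmul_eq_mul, mul_one, one_mul] at h0
    push_cast at h0
    refine h0.congr' ?_
    filter_upwards [eventually_gt_atTop 1] with n hn
    have hl : 0 < Real.log n := Real.log_pos (by exact_mod_cast hn)
    simp only [hg, hL]
    rw [← (Commute.all (Real.log ((n+1:ℕ):ℝ)) (Real.log n)).mul_geom_sum₂ (m+1), mul_assoc, mul_div_assoc, mul_div_assoc]
    push_cast
    congr 2
    rw [Finset.sum_div]
    refine Finset.sum_congr rfl fun i hi => ?_
    simp only [mem_range] at hi
    rw [div_pow, div_eq_div_iff (by positivity) (by positivity), mul_assoc, ← pow_add]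
    congr 2
    omega
  have hgpos : ∀ᶠ n in atTop, g n ≠ 0 := by
    filter_upwards [eventually_gt_atTop 1] with n hn
    have hl : 0 < Real.log n := Real.log_pos (by exact_mod_cast hn)
    have : (0:ℝ) < n := by exact_mod_cast (by omega : 0 < n)
    simp only [hg, hL]
    apply ne_of_gt
    rw [sub_pos]
    refine pow_lt_pow_left₀ (Real.log_lt_log this ?_) hl.le (by omega)
    push_cast; linarith
  have hD' : Tendsto (fun n : ℕ => (n:ℝ) / (1 + D * n)) atTop (nhds (1 / D)) := by
    have h0 : Tendsto (fun n : ℕ => (1:ℝ) / (1 / (n:ℝ) + D)) atTop (nhds (1 / (0 + D))) :=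
      tendsto_const_nhds.div (tendsto_one_div_atTop_nhds_zero_nat.add_const D) (by simp [hD.ne'])
    rw [zero_add] at h0
    refine h0.congr' ?_
    filter_upwards [eventually_gt_atTop 0] with n hn
    have : (0:ℝ) < n := by exact_mod_cast hn
    field_simp
  have hfg : f =o[atTop] g := by
    rw [isLittleO_iff_tendsto' (by filter_upwards [hgpos] with n hn h; exact absurd h hn)]
    have hm : ((m:ℝ) + 1) ≠ 0 := by positivity
    have h0 := (((ha.mul hD').const_mul ((m:ℝ)+1)).div hgr hm).sub_const (1 / D ^ (m+1))
    have : ((m:ℝ)+1) * (1 / D ^ m * (1 / D)) / (m + 1) - 1 / D ^ (m+1) = 0 := by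
      rw [mul_div_cancel_left₀ _ hm, pow_succ]; field_simp; simp
    rw [this] at h0
    refine h0.congr' ?_
    filter_upwards [hgpos, eventually_gt_atTop 1] with n hn hn1
    have hl : 0 < Real.log n := Real.log_pos (by exact_mod_cast hn1)
    have : (0:ℝ) < n := by exact_mod_cast (by omega : 0 < n)
    have h2 : 0 < 1 + D * n := by positivity
    simp only [hf, Pi.div_apply]
    field_simp
  have hsum := hfg.sum_range hgnn (by simpa only [hgsum] using hLtop)
  simp only [hgsum, hfsum] at hsum
  have h1 := hsum.tendsto_div_nhds_zero
  have h2 : Tendsto (fun n => a' 0 / L n) atTop (nhds 0) := tendsto_const_nhds.div_atTop hLtop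
  have h3 := (h1.add h2).add_const (1 / D ^ (m+1))
  simp only [zero_add] at h3
  refine h3.congr' ?_
  filter_upwards [hLtop.eventually_gt_atTop 0] with n hn
  have : L n ≠ 0 := hn.ne'
  change _ = a' n / L n
  field_simp
  ring

theorem coeff_asymp (D : ℝ) (hD : 0 < D) (Y T : PowerSeries ℝ) (hY0 : PowerSeries.constantCoeff Y = 1)
    (hY : (1 - PowerSeries.C D * PowerSeries.X) * PowerSeries.derivative _ Y = Y)
    (hT : (1 - PowerSeries.C D * PowerSeries.X) * PowerSeries.derivative _ T = 1) :
    (∀ n, 0 < PowerSeries.coeff n Y) ∧ ∀ m, Tendsto (fun n : ℕ =>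
      PowerSeries.coeff n (Y * T ^ m) / PowerSeries.coeff n Y / Real.log n ^ m) atTop (nhds (1 / D ^ m)) := by
  have hco : ∀ (F G : PowerSeries ℝ), (1 - PowerSeries.C D * PowerSeries.X) * PowerSeries.derivative _ F = G →
      ∀ n : ℕ, ((n:ℝ) + 1) * PowerSeries.coeff (n+1) F = D * n * PowerSeries.coeff n F + PowerSeries.coeff n G := by
    intro F G h n
    rw [← h, sub_mul, one_mul, map_sub, PowerSeries.coeff_derivative, mul_assoc (PowerSeries.C D), PowerSeries.coeff_C_mul]
    rcases n with _ | n
    · simp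
    · rw [PowerSeries.coeff_succ_X_mul, PowerSeries.coeff_derivative]
      push_cast; ring
  have hy : ∀ n : ℕ, ((n:ℝ) + 1) * PowerSeries.coeff (n+1) Y = (1 + D * n) * PowerSeries.coeff n Y := by
    intro n; rw [hco Y Y hY n]; ring
  have hpos : ∀ n, 0 < PowerSeries.coeff n Y := by
    intro n
    induction n with
    | zero => rw [PowerSeries.coeff_zero_eq_constantCoeff_apply, hY0]; norm_num
    | succ n ih =>
      have h1 := hy n
      have h2 : 0 < (1 + D * n) * PowerSeries.coeff n Y := by positivity
      rw [← h1] at h2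
      exact pos_of_mul_pos_right h2 (by positivity)
  refine ⟨hpos, fun m => ?_⟩
  induction m with
  | zero =>
    simp only [pow_zero, mul_one, div_one]
    refine tendsto_const_nhds.congr fun n => ?_
    rw [div_self (hpos n).ne']
  | succ m ih =>
    refine stolz_step D hD m _ _ ih ?_
    intro n
    have hF : (1 - PowerSeries.C D * PowerSeries.X) * PowerSeries.derivative _ (Y * T ^ (m+1))
        = Y * T ^ (m+1) + PowerSeries.C ((m:ℝ)+1) * (Y * T ^ m) := by
      have e : PowerSeries.C ((m:ℝ)+1) = ((m : PowerSeries ℝ) + 1) := by simp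
      rw [Derivation.leibniz, PowerSeries.derivative_pow, e]
      simp only [smul_eq_mul, Nat.add_sub_cancel]
      push_cast
      linear_combination T ^ (m+1) * hY + Y * (m + 1) * T ^ m * hT
    have h1 := hco _ _ hF n
    rw [map_add, PowerSeries.coeff_C_mul] at h1
    have h2 := hy n
    have p0 := hpos n
    have p1 := hpos (n+1)
    have hn : (0:ℝ) < (n:ℝ) + 1 := by positivity
    have hd : 0 < 1 + D * (n:ℝ) := by positivity
    have e1 : PowerSeries.coeff (n+1) Y = (1 + D * n) * PowerSeries.coeff n Y / (n+1) := by
      rw [eq_div_iff hn.ne']; linarith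
    have e2 : PowerSeries.coeff (n+1) (Y * T ^ (m+1)) = ((1 + D * n) * PowerSeries.coeff n (Y * T ^ (m+1)) + (m+1) * PowerSeries.coeff n (Y * T ^ m)) / (n+1) := by
      rw [eq_div_iff hn.ne']; linarith
    rw [e1, e2]
    field_simp
theorem final_asymp (D : ℝ) (Y T : PowerSeries ℝ)
    (h : ∀ m, Tendsto (fun n : ℕ =>
      PowerSeries.coeff n (Y * T ^ m) / PowerSeries.coeff n Y / Real.log n ^ m) atTop (nhds (1 / D ^ m)))
    (P : Polynomial ℝ) (K : ℕ) (hP : P.natDegree ≤ K) :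
    Tendsto (fun n : ℕ => PowerSeries.coeff n (Y * Polynomial.aeval T P) / PowerSeries.coeff n Y / Real.log n ^ K)
      atTop (nhds (P.coeff K / D ^ K)) := by
  have hlogtop : Tendsto (fun n : ℕ => Real.log n) atTop atTop :=
    Real.tendsto_log_atTop.comp tendsto_natCast_atTop_atTop
  have e : ∀ n : ℕ, PowerSeries.coeff n (Y * Polynomial.aeval T P) =
      ∑ i ∈ range (K+1), P.coeff i * PowerSeries.coeff n (Y * T ^ i) := by
    intro n
    rw [Polynomial.aeval_eq_sum_range' (by omega : P.natDegree < K + 1), Finset.mul_sum, map_sum]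
    refine Finset.sum_congr rfl fun i _ => ?_
    rw [mul_smul_comm, PowerSeries.coeff_smul, smul_eq_mul]
  have hlim : Tendsto (fun n : ℕ => ∑ i ∈ range (K+1), P.coeff i *
      (PowerSeries.coeff n (Y * T ^ i) / PowerSeries.coeff n Y / Real.log n ^ i * (Real.log n ^ (K - i))⁻¹))
      atTop (nhds (∑ i ∈ range (K+1), if i = K then P.coeff K / D ^ K else 0)) := by
    refine tendsto_finsetSum _ fun i hi => ?_
    simp only [mem_range] at hi
    split_ifs with hiK
    · subst hiK
      have := (h i).const_mul (P.coeff i)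
      simpa [div_eq_mul_inv] using this
    · have h1 : Tendsto (fun n : ℕ => (Real.log n ^ (K - i))⁻¹) atTop (nhds 0) :=
        ((tendsto_pow_atTop (by omega)).comp hlogtop).inv_tendsto_atTop
      have := ((h i).mul h1).const_mul (P.coeff i)
      simpa using this
  rw [Finset.sum_ite_eq' (range (K+1)) K, if_pos (by simp)] at hlim
  refine hlim.congr' ?_
  filter_upwards [eventually_gt_atTop 1] with n hn
  have hl : 0 < Real.log n := Real.log_pos (by exact_mod_cast hn)
  rw [e, Finset.sum_div, Finset.sum_div]
  refine Finset.sum_congr rfl fun i hi => ?_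
  simp only [mem_range] at hi
  have : Real.log n ^ K = Real.log n ^ i * Real.log n ^ (K - i) := by
    rw [← pow_add]; congr 1; omega
  rw [this]
  field_simp


/-- for random increasing `d`-ary trees at criticality `p = 1/d`, the `k`-th
moment of the root-cluster size satisfies `m_k(n) ~ E_k (log n)^{2k-1}`. -/
theorem stmt17 (d : ℕ) (hd : 2 ≤ d)
    (r : ℕ → ℕ → ℝ) (b : ℕ → ℝ)
    (hrec : clusterRec (1 / (d : ℝ))
      (fun δ => if δ ≤ d then ((d.factorial : ℝ) / ((d - δ).factorial : ℝ)) else 0) r b)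
    (E : ℕ → ℝ) (hE1 : E 1 = 1 / ((d : ℝ) - 1))
    (hEk : ∀ k : ℕ, 2 ≤ k →
      (2 * (k : ℝ) - 1) * E k
        = (1 / (2 * (d : ℝ))) *
            ∑ j ∈ Finset.Icc 1 (k - 1), (k.choose j : ℝ) * E j * E (k - j))
    (k : ℕ) (hk : 1 ≤ k) :
    Tendsto (fun n : ℕ =>
        ((∑ j ∈ Finset.Icc 1 n, (j : ℝ) ^ k * r n j) / b n) / Real.log n ^ (2 * k - 1))
      atTop (nhds (E k)) := by
  have hd0 : (d:ℝ) ≠ 0 := by positivity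
  have hd2 : (2:ℝ) ≤ d := by exact_mod_cast hd
  have hDpos : (0:ℝ) < (d:ℝ) - 1 := by linarith
  set D : ℝ := (d:ℝ) - 1 with hD
  have hb0 : b 0 = 0 := by rw [hrec.1]; simp
  set B := Bx b with hB
  have hBc : PowerSeries.constantCoeff B = 0 := by
    rw [← PowerSeries.coeff_zero_eq_constantCoeff_apply, hB]; simp [Bx, hb0]
  set R := Psi (Rx r) with hR
  have hR0 : PowerSeries.coeff 0 R = B := coeff_zero_Psi_Rx hrec
  have hRc : ∀ k, PowerSeries.constantCoeff (PowerSeries.coeff k R) = 0 := by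
    intro k
    rw [← PowerSeries.coeff_zero_eq_constantCoeff_apply, hR, coeff_Psi_Rx]; simp
  obtain ⟨Y, hY⟩ : ∃ Y, Y = 1 + B := ⟨_, rfl⟩
  have hYc : PowerSeries.constantCoeff Y = 1 := by rw [hY]; simp [hBc]
  have hYi : Y * Y⁻¹ = 1 := PowerSeries.mul_inv_cancel Y (by rw [hYc]; norm_num)
  obtain ⟨V, hV⟩ : ∃ V, V = Y⁻¹ := ⟨_, rfl⟩
  rw [← hV] at hYi
  have hVc : PowerSeries.constantCoeff V = 1 := by
    have := congrArg PowerSeries.constantCoeff hYi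
    rw [map_mul, hYc] at this
    simpa using this
  obtain ⟨N, hN⟩ : ∃ N, N = PowerSeries.C V * (R - PowerSeries.C B) := ⟨_, rfl⟩
  have hYV : PowerSeries.C Y * PowerSeries.C V = 1 := by rw [← map_mul, hYi, map_one]
  have hYN : PowerSeries.C Y * N = R - PowerSeries.C B := by
    rw [hN, ← mul_assoc, hYV, one_mul]
  have hCB : PowerSeries.C B = PowerSeries.C Y - 1 := by rw [hY]; simp
  have hlin : PowerSeries.C (PowerSeries.C (1 / (d:ℝ))) * R +
      PowerSeries.C (PowerSeries.C (1 - 1 / (d:ℝ))) * PowerSeries.C B + 1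
      = PowerSeries.C Y * (1 + PowerSeries.C (PowerSeries.C (1 / (d:ℝ))) * N) := by
    rw [map_sub, map_sub, map_one, map_one]
    linear_combination (-PowerSeries.C (PowerSeries.C (1 / (d:ℝ)))) * hYN + hCB
  have hsys : ∀ k, PowerSeries.derivative _ (PowerSeries.coeff k R) = Y ^ d *
      PowerSeries.coeff k (PowerSeries.map PowerSeries.C (PowerSeries.exp ℝ) *
        (1 + PowerSeries.C (PowerSeries.C (1 / (d:ℝ))) * N) ^ d) := by
    intro k
    rw [hR, system hrec k, ← hR, ← hB, hlin, mul_pow, ← map_pow, mul_left_comm, PowerSeries.coeff_C_mul]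
  have hN0 : PowerSeries.coeff 0 N = 0 := by
    rw [hN, PowerSeries.coeff_C_mul, map_sub, hR0]; simp
  have hNk : ∀ k, 1 ≤ k → PowerSeries.coeff k R = Y * PowerSeries.coeff k N := by
    intro k hk
    rw [← PowerSeries.coeff_C_mul, hYN, map_sub, PowerSeries.coeff_C, if_neg (by omega), sub_zero]
  have hNc : ∀ k, PowerSeries.constantCoeff (PowerSeries.coeff k N) = 0 := by
    intro k
    rw [hN, PowerSeries.coeff_C_mul, map_mul, map_sub, map_sub, hRc, PowerSeries.coeff_C]
    split_ifs <;> simp [hBc]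
  have hY' : PowerSeries.derivative _ Y = Y ^ d := by
    have h0 := hsys 0
    rw [hR0] at h0
    have h1 : PowerSeries.coeff 0 (PowerSeries.map PowerSeries.C (PowerSeries.exp ℝ) *
        (1 + PowerSeries.C (PowerSeries.C (1 / (d:ℝ))) * N) ^ d) = 1 := by
      rw [PowerSeries.coeff_zero_eq_constantCoeff_apply] at hN0 ⊢
      have : PowerSeries.constantCoeff (PowerSeries.map (PowerSeries.C (R := ℝ)) (PowerSeries.exp ℝ)) = 1 := by
        rw [← PowerSeries.coeff_zero_eq_constantCoeff_apply, PowerSeries.coeff_map]; simp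
      rw [map_mul, this, map_pow, map_add, map_mul, hN0]
      simp
    rw [h1, mul_one] at h0
    rw [hY, map_add, ← hY, h0, PowerSeries.derivative_one, zero_add]
  have hdd : d = (d - 1) + 1 := by omega
  have hVp : V ^ (d - 1) = 1 - PowerSeries.C D * PowerSeries.X := by
    apply PowerSeries.derivative.ext
    · rw [PowerSeries.derivative_pow, hV, PowerSeries.derivative_inv', hY', ← hV]
      obtain ⟨e, rfl⟩ : ∃ e, d = e + 2 := ⟨d - 2, by omega⟩
      have h1 : (Y * V) ^ (e + 2) = 1 := by rw [hYi, one_pow]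
      have h2 : e + 2 - 1 - 1 = e := by omega
      have h3 : e + 2 - 1 = e + 1 := by omega
      rw [h2, h3]
      have h4 : PowerSeries.C D = ((e + 1 : ℕ) : PowerSeries ℝ) := by
        rw [hD]; push_cast
        simp only [map_sub, map_add, map_natCast, map_one, map_ofNat]; ring
      rw [h4, map_sub, PowerSeries.derivative_one, Derivation.leibniz]
      simp only [PowerSeries.derivative_X, Derivation.map_natCast, smul_eq_mul, mul_one, mul_zero, add_zero]
      rw [mul_pow] at h1
      linear_combination (-((e + 1 : ℕ) : PowerSeries ℝ)) * h1
    · simp [hVc]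
  have hVY : V ^ (d-1) * Y ^ (d-1) = 1 := by rw [← mul_pow, mul_comm, hYi, one_pow]
  have hYode : (1 - PowerSeries.C D * PowerSeries.X) * PowerSeries.derivative _ Y = Y := by
    have : Y ^ d = Y ^ (d-1) * Y := by rw [← pow_succ, ← hdd]
    rw [← hVp, hY', this, ← mul_assoc, hVY, one_mul]
  obtain ⟨T, hT', hT0⟩ : ∃ T : PowerSeries ℝ, PowerSeries.derivative _ T = Y ^ (d-1) ∧ PowerSeries.constantCoeff T = 0 := by
    refine ⟨PowerSeries.mk fun n => PowerSeries.coeff (n-1) (Y ^ (d-1)) / (n:ℝ), ?_, ?_⟩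
    · ext n
      have : (n:ℝ) + 1 ≠ 0 := by positivity
      rw [PowerSeries.coeff_derivative, PowerSeries.coeff_mk]
      push_cast
      rw [div_mul_cancel₀ _ this]
    · rw [← PowerSeries.coeff_zero_eq_constantCoeff_apply, PowerSeries.coeff_mk]; simp
  have hTode : (1 - PowerSeries.C D * PowerSeries.X) * PowerSeries.derivative _ T = 1 := by
    rw [← hVp, hT', hVY]
  have hode : ∀ k, 1 ≤ k → PowerSeries.derivative _ (PowerSeries.coeff k N) = Y ^ (d - 1) *
      PowerSeries.coeff k (PowerSeries.map PowerSeries.C (PowerSeries.exp ℝ) *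
        (1 + PowerSeries.C (PowerSeries.C (1 / (d:ℝ))) * N) ^ d - N) := by
    intro k hk
    have h0 := hsys k
    rw [hNk k hk, Derivation.leibniz, hY'] at h0
    simp only [smul_eq_mul] at h0
    rw [map_sub]
    have : Y ^ d = Y ^ (d-1) * Y := by rw [← pow_succ, ← hdd]
    rw [this] at h0
    set q := PowerSeries.coeff k (PowerSeries.map PowerSeries.C (PowerSeries.exp ℝ) *
        (1 + PowerSeries.C (PowerSeries.C (1 / (d:ℝ))) * N) ^ d)
    set n' := PowerSeries.derivative _ (PowerSeries.coeff k N)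
    linear_combination V * h0 + (Y ^ (d-1) * q - n' - Y ^ (d-1) * PowerSeries.coeff k N) * hYi
  have hfac : ∀ k : ℕ, (k.factorial : ℝ) ≠ 0 := fun k => by positivity
  obtain ⟨P, hP1, hP2, hP3⟩ := poly_structure d hd Y T hT' hT0 N hN0 hNc hode
    (fun k => D ^ (2 * k - 1) * E k / k.factorial) (by simp [hE1]; field_simp) (by
      intro k hk
      have h1 := hEk k hk
      have h2 : (2 * (k:ℝ) - 1) * (D ^ (2 * k - 1) * E k / k.factorial)
        = D ^ (2 * k - 1) / k.factorial * ((2 * (k:ℝ) - 1) * E k) := by ring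
      simp only [h2, h1, Finset.mul_sum]
      refine Finset.sum_congr rfl fun j hj => ?_
      simp only [Finset.mem_Icc] at hj
      rw [Nat.cast_choose ℝ (by omega : j ≤ k)]
      have h3 : D ^ (2 * k - 1) = D * D ^ (2 * j - 1) * D ^ (2 * (k - j) - 1) := by
        rw [← pow_succ', ← pow_add]; congr 1; omega
      rw [h3]
      have := hfac k
      have := hfac j
      have := hfac (k - j)
      field_simp
      rw [hD]
      ring) k hk
  obtain ⟨hpos, has⟩ := coeff_asymp D hDpos Y T hYc hYode hTode
  have hfin := (final_asymp D Y T has P (2 * k - 1) hP2).const_mul (k.factorial : ℝ)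
  have hlimE : (k.factorial : ℝ) * (P.coeff (2 * k - 1) / D ^ (2 * k - 1)) = E k := by
    rw [hP3]
    have := hfac k
    field_simp
  rw [hlimE] at hfin
  refine hfin.congr' ?_
  filter_upwards [eventually_gt_atTop 0] with n hn
  have hYn : PowerSeries.coeff n Y = b n / n.factorial := by
    rw [hY, map_add, PowerSeries.coeff_one, if_neg (by omega), zero_add, hB]; simp [Bx]
  have hp := hpos n
  rw [hYn] at hp
  have hbn : b n ≠ 0 := by
    intro h; rw [h] at hp; simp at hp
  rw [← hP1, ← hNk k hk, hR, coeff_Psi_Rx, hYn]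
  have := hfac k
  have := hfac n
  field_simp
end

section
/- Let α and p be real numbers and consider the 4×4 real matrix A^c with rows (α+p, 1-p, 0, 0), (1-p, α+p, 0, 0), (0, 1-p, 0, 0), (1-p, 0, 0, 0). Then the characteristic polynomial of A^c is λ^2·(λ-(1+α))·(λ-(2p+α-1)); in particular the eigenvalues of A^c are 1+α, 2p+α-1, and 0 (the latter with algebraic multiplicity two). Moreover, if α ≠ -1, α ≠ 1-2p, and p ≠ 1, then A^c is diagonalizable over ℝ. -/
/-- the intensity matrix `A^c` of the Pólya urn tracking red/blue weights
and red/blue clusters has characteristic polynomial `λ²(λ-(1+α))(λ-(2p+α-1))`, and is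
diagonalizable over `ℝ` whenever `α ≠ -1`, `α ≠ 1-2p`, and `p ≠ 1`. -/
theorem stmt19 (α p : ℝ) :
    (Matrix.charpoly
        (!![α + p, 1 - p, 0, 0;
            1 - p, α + p, 0, 0;
            0, 1 - p, 0, 0;
            1 - p, 0, 0, 0] : Matrix (Fin 4) (Fin 4) ℝ)
      = Polynomial.X ^ 2 * (Polynomial.X - Polynomial.C (1 + α))
          * (Polynomial.X - Polynomial.C (2 * p + α - 1))) ∧
    (α ≠ -1 → α ≠ 1 - 2 * p → p ≠ 1 →
      ∃ P D : Matrix (Fin 4) (Fin 4) ℝ, IsUnit P ∧ D.IsDiag ∧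
        (!![α + p, 1 - p, 0, 0;
            1 - p, α + p, 0, 0;
            0, 1 - p, 0, 0;
            1 - p, 0, 0, 0] : Matrix (Fin 4) (Fin 4) ℝ) = P * D * P⁻¹) := by
  constructor
  · rw [Matrix.charpoly, Matrix.det_succ_row_zero]
    simp [Fin.sum_univ_succ, Matrix.det_fin_three, Matrix.charmatrix_apply, Matrix.diagonal_apply,
      Fin.succAbove]
    have h2 : (Polynomial.C (2 : ℝ)) = 2 := rfl
    simp only [h2]
    ring
  · intro h1 h2 _
    have a1 : 1 + α ≠ 0 := fun h => h1 (by linarith)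
    have a2 : 2 * p + α - 1 ≠ 0 := fun h => h2 (by linarith)
    let P : Matrix (Fin 4) (Fin 4) ℝ :=
      !![1 + α, 2 * p + α - 1, 0, 0;
         1 + α, -(2 * p + α - 1), 0, 0;
         1 - p, -(1 - p), 1, 0;
         1 - p, 1 - p, 0, 1]
    have hdet : P.det = -2 * (1 + α) * (2 * p + α - 1) := by
      rw [Matrix.det_succ_row_zero]
      simp [P, Fin.sum_univ_succ, Matrix.det_fin_three, Fin.succAbove]
      ring
    have hu : IsUnit P.det := by
      rw [hdet]
      exact (mul_ne_zero (mul_ne_zero (by norm_num) a1) a2).isUnit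
    refine ⟨P, Matrix.diagonal ![1 + α, 2 * p + α - 1, 0, 0],
      (Matrix.isUnit_iff_isUnit_det P).2 hu, Matrix.isDiag_diagonal _, ?_⟩
    have key : (!![α + p, 1 - p, 0, 0;
            1 - p, α + p, 0, 0;
            0, 1 - p, 0, 0;
            1 - p, 0, 0, 0] : Matrix (Fin 4) (Fin 4) ℝ) * P
        = P * Matrix.diagonal ![1 + α, 2 * p + α - 1, 0, 0] := by
      ext i j
      rw [Matrix.mul_diagonal]
      fin_cases i <;> fin_cases j <;>
        simp [P, Matrix.mul_apply, Fin.sum_univ_succ] <;> ring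
    rw [← key, Matrix.mul_nonsing_inv_cancel_right _ _ hu]
end
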